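/- Let (T, m) be a complete local equidimensional ring such that dim T ≥ 2 and depth T > 1. Suppose that no integer of T is a zerodivisor in T and that |T| = |T/m|. Let d and t be integers such that 1 ≤ d ≤ dim T − 1, 0 ≤ t ≤ dim T − 1, and d − 1 ≤ t. Assume that for every p ∈ Ass T, ht p ≤ d − 1, and that if z is a regular element of T and Q ∈ Ass(T/zT), then ht Q ≤ d. Then there exists a local unique factorization domain A such that the completion of A is T, α(A,(0)) = t, and α(A,p) = d − 1 for every height one prime ideal p of A. -/

import Mathlib

universe u

open IsLocalRing Cardinal

/-- The height of an ideal: infimum of heights of primes containing it. -/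
noncomputable def idealHt {T : Type*} [CommRing T] (I : Ideal T) : ℕ∞ :=
  ⨅ (p : PrimeSpectrum T) (_ : I ≤ p.asIdeal), Order.height p

/-- `T` is equidimensional: `dim (T/p) = dim T` for every minimal prime `p`. -/
def IsEquidim (T : Type*) [CommRing T] : Prop :=
  ∀ p ∈ minimalPrimes T, ringKrullDim (T ⧸ p) = ringKrullDim T

/-- `depth T > 1`: there is a regular sequence of length two inside the maximal ideal. -/
def DepthGTOne (T : Type*) [CommRing T] [IsLocalRing T] : Prop :=
  ∃ x y : T, x ∈ maximalIdeal T ∧ y ∈ maximalIdeal T ∧ x ∈ nonZeroDivisors T ∧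
    Ideal.Quotient.mk (Ideal.span {x}) y ∈ nonZeroDivisors (T ⧸ Ideal.span {x})

/-- A local (Noetherian) unique factorization domain `A` together with an identification
of its `maximalIdeal A`-adic completion with `T`. -/
structure LocalUFDWithCompletion (T : Type u) [CommRing T] : Type (u + 1) where
  /-- the underlying ring -/
  A : Type u
  [commRing : CommRing A]
  [isDomain : IsDomain A]
  [isNoetherian : IsNoetherianRing A]
  [isLocalRing : IsLocalRing A]
  [ufd : UniqueFactorizationMonoid A]
  /-- the natural map from `A` to its completion `T` -/
  toCompletion : A →+* T
  /-- the completion of `A` is `T` -/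
  completionEquiv : AdicCompletion (IsLocalRing.maximalIdeal A) A ≃+* T
  completionEquiv_comp : ∀ a : A,
    completionEquiv (algebraMap A (AdicCompletion (IsLocalRing.maximalIdeal A) A) a) =
      toCompletion a

attribute [instance] LocalUFDWithCompletion.commRing LocalUFDWithCompletion.isDomain
  LocalUFDWithCompletion.isNoetherian LocalUFDWithCompletion.isLocalRing
  LocalUFDWithCompletion.ufd

/-- `α(A, p)`: the Krull dimension of the formal fiber ring `T ⊗_A κ(p)` of `A` at the
prime ideal `p`, where `κ(p) = A_p / p A_p` and `T` is the completion of `A`. -/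
noncomputable def alphaAt {T : Type u} [CommRing T] (X : LocalUFDWithCompletion T)
    (p : Ideal X.A) (hp : p.IsPrime) : WithBot ℕ∞ :=
  letI := X.toCompletion.toAlgebra
  haveI := hp
  ringKrullDim (TensorProduct X.A T
    (Localization.AtPrime p ⧸ IsLocalRing.maximalIdeal (Localization.AtPrime p)))

/-!
The ring `A` is the union of a chain of subrings `R` of `T`, each a UFD equal to `Frac R ∩ T`,
which starts at `ℚ ∩ T`; here `Frac R ∩ T` consists of the elements `a / b` of `T` with `a, b ∈ R`
and `b` regular. Along the chain one keeps track of a set `C` of primes of `T` smaller than the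
residue field: `Ass T`, a fixed prime `Q₀` of height `t` with `Q₀ ∩ R = 0`, and, for every prime
element `z` of `R`, the set `Ass (T / zT)` and one prime of height `d` containing `z`. Every prime
in `C` is required to meet `R` in `0` or in a principal ideal generated by a prime element.

The chain grows by elements that are transcendental over `R` modulo the relevant primes in `C`.
Such elements exist because translating by multiples of the more than `|R| + |C|` residue classes
avoids all bad choices, and the hypothesis `ht Q ≤ d` for `Q ∈ Ass (T / zT)` leaves room to choose
the prime of height `d` for each new prime element. Since `|T| = |T / m|`, a well-ordered recursion
treats every ideal and every element of `T`, and in the end `IT ∩ A = I` for the ideals `I` of `A`,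
and `A → T / J` is onto for every `J` that lies in no prime of `C`. Taking `J = m ^ n` shows that
`A` is Noetherian with completion `T`.

Now let `Q` be a prime of `T`. If `Q` lies in no prime of `C`, then surjectivity modulo `Q ^ 2` and
Nakayama give `Q = (Q ∩ A)T`. For `Q ∩ A = 0` this forces `Q = 0`, so otherwise `ht Q ≤ t`, with
equality for `Q₀`; for `Q ∩ A = zA` it forces `ht Q ≤ 1`, so `ht Q ≤ d` in any case, with equality
for a prime in `C`. A prime of `T` containing `z` is not minimal, so the fiber over `zA` has
dimension `d - 1`.
-/

section Cardinality

lemma mk_union_le_of_aleph0_le {α : Type u} {s t : Set α} {μ : Cardinal.{u}} (hμ : ℵ₀ ≤ μ)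
    (hs : #s ≤ μ) (ht : #t ≤ μ) : #(s ∪ t : Set α) ≤ μ :=
  (mk_union_le s t).trans (add_le_of_le hμ hs ht)

lemma mk_biUnion_le_of_aleph0_le {ι α : Type u} {s : Set ι} {A : ι → Set α} {μ : Cardinal.{u}}
    (hμ : ℵ₀ ≤ μ) (hs : #s ≤ μ) (hA : ∀ i ∈ s, #(A i) ≤ μ) : #(⋃ i ∈ s, A i : Set α) ≤ μ :=
  calc #(⋃ i ∈ s, A i : Set α) ≤ #s * ⨆ x : s, #(A x.1) := mk_biUnion_le A s
    _ ≤ μ * μ := by gcongr; exact ciSup_le' fun x => hA x.1 x.2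
    _ = μ := mul_eq_self hμ

end Cardinality

section Avoidance

variable {T : Type u} [CommRing T] [IsLocalRing T]

/-- A set-theoretic section of the residue map; its values serve as "generic" scalars. -/
noncomputable def residueLift (k : ResidueField T) : T :=
  Function.surjInv residue_surjective k

lemma isUnit_residueLift_sub {k l : ResidueField T} (hkl : k ≠ l) :
    IsUnit (residueLift k - residueLift l) := by
  have hres : ∀ k : ResidueField T, residue T (residueLift k) = k :=
    Function.surjInv_eq residue_surjective
  rw [← residue_ne_zero_iff_isUnit, map_sub, hres, hres]
  exact sub_ne_zero.2 hkl

lemma exists_add_mul_mem_imp {C : Set (Ideal T)} (hC : #C < #(ResidueField T)) (a b : T) :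
    ∃ c : T, ∀ P ∈ C, a + c * b ∈ P → a ∈ P ∧ b ∈ P := by
  by_contra! hbad
  choose P hPC hmem hab using fun k : ResidueField T => hbad (residueLift k)
  refine hC.not_ge (mk_le_of_injective (f := fun k => (⟨P k, hPC k⟩ : C)) fun k l hkl => ?_)
  by_contra hne
  have hP : P k = P l := congrArg Subtype.val hkl
  have hdiff : (residueLift k - residueLift l) * b ∈ P k := by
    convert (P k).sub_mem (hmem k) (hP ▸ hmem l) using 1
    ring
  have hb : b ∈ P k := (Ideal.unit_mul_mem_iff_mem _ (isUnit_residueLift_sub hne)).1 hdiff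
  have ha : a ∈ P k := (Ideal.add_mem_iff_left _ ((P k).mul_mem_left _ hb)).1 (hmem k)
  exact hab k ha hb

lemma exists_mem_forall_notMem [IsNoetherianRing T] {C : Set (Ideal T)}
    (hC : #C < #(ResidueField T)) {J : Ideal T} (hJ : ∀ P ∈ C, ¬ J ≤ P) :
    ∃ w ∈ J, ∀ P ∈ C, w ∉ P := by
  suffices h : ∃ w ∈ J, ∀ P ∈ C, w ∈ P → J ≤ P by
    obtain ⟨w, hw, hwC⟩ := h
    exact ⟨w, hw, fun P hP hwP => hJ P hP (hwC P hP hwP)⟩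
  clear hJ
  induction J, IsNoetherian.noetherian J using Submodule.fg_induction with
  | singleton x =>
    exact ⟨x, Submodule.mem_span_singleton_self x, fun P _ hx =>
      (Submodule.span_singleton_le_iff_mem x P).2 hx⟩
  | sup J₁ J₂ _ _ ih₁ ih₂ =>
    obtain ⟨w₁, hw₁, h₁⟩ := ih₁
    obtain ⟨w₂, hw₂, h₂⟩ := ih₂
    obtain ⟨c, hc⟩ := exists_add_mul_mem_imp hC w₁ w₂
    refine ⟨w₁ + c * w₂, Submodule.add_mem_sup hw₁ (J₂.smul_mem c hw₂), fun P hP h => ?_⟩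
    exact sup_le (h₁ P hP (hc P hP h).1) (h₂ P hP (hc P hP h).2)

open Polynomial in
/-- `x` is transcendental over `R` modulo `P`: a polynomial over `R` whose value at `x` lies in
`P` has all its coefficients in `P`. -/
def IsTranscendentalMod (R : Subring T) (P : Ideal T) (x : T) : Prop :=
  ∀ p : R[X], aeval x p ∈ P → ∀ i, (p.coeff i : T) ∈ P

open Polynomial in
lemma finite_setOf_aeval_add_residueLift_mul_mem {R : Subring T} {P : Ideal T} [P.IsPrime]
    {p : R[X]} {i : ℕ} (hp : (p.coeff i : T) ∉ P) (a : T) {b : T} (hb : b ∉ P) :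
    {k : ResidueField T | aeval (a + residueLift k * b) p ∈ P}.Finite := by
  let φ : R →+* T ⧸ P := (Ideal.Quotient.mk P).comp R.subtype
  have hp0 : p.map φ ≠ 0 := fun h => hp <| by
    have hi := congrArg (fun q => q.coeff i) h
    rwa [coeff_map, coeff_zero, RingHom.comp_apply, Ideal.Quotient.eq_zero_iff_mem] at hi
  refine Set.Finite.of_finite_image
    (f := fun k => Ideal.Quotient.mk P (a + residueLift k * b))
    ((finite_setOfPred_isRoot hp0).subset ?_) fun k _ l _ hkl => ?_
  · rintro _ ⟨k, hk, rfl⟩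
    rw [Set.mem_ofPred_eq, ← Ideal.Quotient.eq_zero_iff_mem, aeval_def, hom_eval₂] at hk
    rwa [Set.mem_ofPred_eq, IsRoot.def, eval_map]
  · by_contra hne
    refine hb ((Ideal.unit_mul_mem_iff_mem _ (isUnit_residueLift_sub hne)).1 ?_)
    convert Ideal.Quotient.eq.1 hkl using 1
    ring

open Polynomial in
lemma exists_forall_isTranscendentalMod (hκ : ℵ₀ < #(ResidueField T)) {R : Subring T}
    (hR : #R < #(ResidueField T)) {C : Set (Ideal T)} (hC : #C < #(ResidueField T))
    (hprime : ∀ P ∈ C, P.IsPrime) (a : Ideal T → T) {b : Ideal T → T} (hb : ∀ P ∈ C, b P ∉ P) :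
    ∃ u : T, ∀ P ∈ C, IsTranscendentalMod R P (a P + u * b P) := by
  by_contra! hbad
  simp only [IsTranscendentalMod] at hbad
  push Not at hbad
  choose P hPC p hp i hi using fun k : ResidueField T => hbad (residueLift k)
  have hle : #(ResidueField T) ≤ #(C × R[X]) * ℵ₀ := by
    refine mk_le_mk_mul_of_mk_preimage_le (fun k => ((⟨P k, hPC k⟩ : C), p k)) ?_
    rintro ⟨⟨Q, hQ⟩, q⟩
    have := hprime Q hQ
    refine le_aleph0_iff_set_countable.2 ?_
    obtain hempty | ⟨k, hk⟩ := Set.eq_empty_or_nonempty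
      ((fun k => ((⟨P k, hPC k⟩ : C), p k)) ⁻¹' {(⟨Q, hQ⟩, q)})
    · simp only [hempty, Set.countable_empty]
    simp only [Set.mem_preimage, Set.mem_singleton_iff, Prod.mk.injEq, Subtype.mk.injEq] at hk
    obtain ⟨rfl, rfl⟩ := hk
    refine ((finite_setOf_aeval_add_residueLift_mul_mem (hi k) (a (P k))
      (hb _ hQ)).subset fun l hl => ?_).countable
    simp only [Set.mem_preimage, Set.mem_singleton_iff, Prod.mk.injEq, Subtype.mk.injEq] at hl
    have hpl := hp l
    rwa [hl.1, hl.2] at hpl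
  refine hle.not_gt (mul_lt_of_lt hκ.le ?_ hκ)
  rw [mk_prod, lift_id, lift_id]
  exact mul_lt_of_lt hκ.le hC (cardinalMk_le_max.trans_lt (max_lt hR hκ))

end Avoidance

section AssociatedPrimes

variable {T : Type u} [CommRing T]

/-- The associated primes of the `T`-module `T / zT`. -/
abbrev associatedPrimesMod (z : T) : Set (Ideal T) :=
  associatedPrimes T (T ⧸ Ideal.span {z})

lemma smul_mk_span_singleton_eq_zero_iff {z r y : T} :
    r • Ideal.Quotient.mk (Ideal.span {z}) y = 0 ↔ z ∣ r * y := by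
  rw [Algebra.smul_def, Ideal.Quotient.algebraMap_eq, ← map_mul,
    Ideal.Quotient.eq_zero_iff_mem, Ideal.mem_span_singleton]

lemma mem_of_mem_associatedPrimesMod {z : T} {P : Ideal T} (hP : P ∈ associatedPrimesMod z) :
    z ∈ P := by
  have hle := IsAssociatedPrime.annihilator_le hP
  rwa [Submodule.annihilator_top, Ideal.annihilator_quotient,
    Ideal.span_singleton_le_iff_mem] at hle

variable [IsNoetherianRing T]

lemma mem_associatedPrimesMod_iff {z : T} {P : Ideal T} :
    P ∈ associatedPrimesMod z ↔ P.IsPrime ∧ ∃ y : T, ∀ r, r ∈ P ↔ z ∣ r * y := by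
  rw [AssociatedPrimes.mem_iff, isAssociatedPrime_iff,
    Ideal.Quotient.mk_surjective.exists]
  simp only [SetLike.ext_iff, Submodule.mem_colon_singleton, Submodule.mem_bot,
    smul_mk_span_singleton_eq_zero_iff]

lemma exists_mem_associatedPrimesMod {z r y : T} (hdvd : z ∣ r * y) (hy : ¬ z ∣ y) :
    ∃ P ∈ associatedPrimesMod z, r ∈ P := by
  have hy0 : Ideal.Quotient.mk (Ideal.span {z}) y ≠ 0 := by
    rwa [Ne, Ideal.Quotient.eq_zero_iff_mem, Ideal.mem_span_singleton]
  obtain ⟨P, hP, hle⟩ := exists_le_isAssociatedPrime_of_isNoetherianRing T _ hy0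
  refine ⟨P, hP, hle ?_⟩
  rwa [Submodule.mem_colon_singleton, Submodule.mem_bot, smul_mk_span_singleton_eq_zero_iff]

lemma associatedPrimesMod_nonempty {z : T} (hz : ¬ IsUnit z) :
    (associatedPrimesMod z).Nonempty := by
  obtain ⟨P, hP, -⟩ := exists_mem_associatedPrimesMod (z := z) (r := z) (y := 1) (by simp)
    fun h => hz (isUnit_of_dvd_one h)
  exact ⟨P, hP⟩

lemma minimalPrimes_span_singleton_subset_associatedPrimesMod (z : T) :
    (Ideal.span {z}).minimalPrimes ⊆ associatedPrimesMod z := by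
  simpa only [Ideal.annihilator_quotient] using
    Module.associatedPrimes.minimalPrimes_annihilator_subset_associatedPrimes T
      (T ⧸ Ideal.span {z})

lemma mem_nonZeroDivisors_iff_forall_associatedPrimes {r : T} :
    r ∈ nonZeroDivisors T ↔ ∀ P ∈ associatedPrimes T T, r ∉ P := by
  have h := congrArg (r ∈ ·) (biUnion_associatedPrimes_eq_compl_nonZeroDivisors T)
  simp only [Set.mem_iUnion, Set.mem_compl_iff, SetLike.mem_coe, eq_iff_iff] at h
  rw [← not_iff_not, ← h]
  push Not
  simp only [exists_prop]

lemma mem_associatedPrimesMod_of_mem {f z : T} {P : Ideal T} (hf : f ∈ nonZeroDivisors T)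
    (hz : z ∈ nonZeroDivisors T) (hP : P ∈ associatedPrimesMod f) (hzP : z ∈ P) :
    P ∈ associatedPrimesMod z := by
  obtain ⟨hprime, y, hy⟩ := mem_associatedPrimesMod_iff.1 hP
  obtain ⟨y', hy'⟩ := (hy z).1 hzP
  refine mem_associatedPrimesMod_iff.2 ⟨hprime, y', fun r => ?_⟩
  calc r ∈ P ↔ z * f ∣ z * (r * y) := by rw [hy, dvd_cancel_left_mem_nonZeroDivisors hz]
    _ ↔ f * z ∣ f * (r * y') := by rw [mul_left_comm z r y, hy', mul_left_comm r f y', mul_comm z f]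
    _ ↔ z ∣ r * y' := dvd_cancel_left_mem_nonZeroDivisors hf

end AssociatedPrimes

section Heights

variable {T : Type u} [CommRing T]

/-- `I` is generated by `n` elements, all its minimal primes have height exactly `n` (the largest
height that Krull's theorem allows), and they avoid the set `N`. -/
structure IsPureAvoiding (N : Set T) (n : ℕ) (I : Ideal T) : Prop where
  spanRank_le : I.spanRank ≤ n
  le_height : ∀ P ∈ I.minimalPrimes, n ≤ P.height
  notMem : ∀ P ∈ I.minimalPrimes, ∀ r ∈ N, r ∉ P

variable {N : Set T} {n : ℕ} {I : Ideal T}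

lemma spanRank_sup_span_singleton_le (hI : I.spanRank ≤ n) (x : T) :
    (I ⊔ Ideal.span {x}).spanRank ≤ (n + 1 : ℕ) := by
  push_cast
  exact Submodule.spanRank_sup_le_sum_spanRank.trans
    (add_le_add hI ((Submodule.spanRank_span_le_card {x}).trans (mk_singleton x).le))

lemma isPureAvoiding_bot (hN : N ⊆ nonZeroDivisors T) : IsPureAvoiding N 0 (⊥ : Ideal T) where
  spanRank_le := by simp
  le_height := by simp
  notMem _ hP _ hr hrP := Set.disjoint_left.1
    (Ideal.disjoint_nonZeroDivisors_of_mem_minimalPrimes hP) hrP (hN hr)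

lemma IsPureAvoiding.add_one_le_height (hI : IsPureAvoiding N n I) {y : T}
    (hy : ∀ P ∈ I.minimalPrimes, y ∉ P) {Q : Ideal T} [Q.IsPrime]
    (hQ : I ⊔ Ideal.span {y} ≤ Q) : (n + 1 : ℕ) ≤ Q.height := by
  obtain ⟨P, hP, hPQ⟩ := Ideal.exists_minimalPrimes_le (le_sup_left.trans hQ)
  have := hP.1.1
  have hyQ : y ∈ Q := (Ideal.span_singleton_le_iff_mem Q).1 (le_sup_right.trans hQ)
  have hlt : P < Q := lt_of_le_of_ne hPQ fun h => hy P hP (h ▸ hyQ)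
  push_cast
  exact (by gcongr; exact hI.le_height P hP : (n + 1 : ℕ∞) ≤ P.height + 1).trans
    (Ideal.height_add_one_le_of_lt_of_isPrime hlt)

variable [IsNoetherianRing T]

lemma height_le_of_spanRank_le (hI : I.spanRank ≤ n) {P : Ideal T} (hP : P ∈ I.minimalPrimes) :
    P.height ≤ n :=
  (I.height_le_spanRank_toENat_of_mem_minimalPrimes P hP).trans <| by
    simpa using toENat_le_natCast.2 hI

lemma isPureAvoiding_span_singleton {f : T} (hf : f ∈ nonZeroDivisors T)
    (hN : ∀ P ∈ associatedPrimesMod f, ∀ r ∈ N, r ∉ P) :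
    IsPureAvoiding N 1 (Ideal.span {f}) where
  spanRank_le := by simpa using Submodule.spanRank_span_le_card (R := T) {f}
  le_height P hP := by
    simpa using (Ideal.one_le_height_span_singleton_of_mem_nonZeroDivisors hf).trans
      (Ideal.height_mono hP.1.2)
  notMem P hP := hN P (minimalPrimes_span_singleton_subset_associatedPrimesMod f hP)

lemma IsPureAvoiding.sup_span_singleton (hI : IsPureAvoiding N n I) {x : T}
    (hx : ∀ P ∈ I.minimalPrimes, x ∉ P)
    (hxN : ∀ r ∈ N, ∀ P ∈ (I ⊔ Ideal.span {r}).minimalPrimes, x ∉ P) :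
    IsPureAvoiding N (n + 1) (I ⊔ Ideal.span {x}) where
  spanRank_le := spanRank_sup_span_singleton_le hI.spanRank_le x
  le_height Q hQ := by
    have := hQ.1.1
    exact hI.add_one_le_height hx hQ.1.2
  notMem Q hQ r hr hrQ := by
    -- If `r ∈ Q`, then `Q` is already minimal over `I ⊔ (r)`, by comparing heights.
    have := hQ.1.1
    obtain ⟨P, hP, hPQ⟩ := Ideal.exists_minimalPrimes_le
      (sup_le (le_sup_left.trans hQ.1.2) ((Ideal.span_singleton_le_iff_mem Q).2 hrQ))
    have := hP.1.1
    have hle : Q.height ≤ P.height :=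
      (height_le_of_spanRank_le (spanRank_sup_span_singleton_le hI.spanRank_le x) hQ).trans
        (hI.add_one_le_height (fun P hP => hI.notMem P hP r hr) hP.1.2)
    refine hxN r hr P hP (Ideal.eq_of_le_of_height_le _ hPQ hle ▸ ?_)
    exact (Ideal.span_singleton_le_iff_mem Q).1 (le_sup_right.trans hQ.1.2)

variable [IsLocalRing T]

lemma IsPureAvoiding.exists_succ (hκ : ℵ₀ < #(ResidueField T)) (hN : #N < #(ResidueField T))
    (hI : IsPureAvoiding N n I) (hIm : I ≤ maximalIdeal T)
    (hdim : (n + 1 : ℕ) < (maximalIdeal T).height) :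
    ∃ J, I ≤ J ∧ J ≤ maximalIdeal T ∧ IsPureAvoiding N (n + 1) J := by
  let C : Set (Ideal T) := I.minimalPrimes ∪ ⋃ r ∈ N, (I ⊔ Ideal.span {r}).minimalPrimes
  have hfin : ∀ J : Ideal T, #J.minimalPrimes ≤ max ℵ₀ #N := fun J =>
    (Ideal.finite_minimalPrimes_of_isNoetherianRing T J).countable.le_aleph0.trans
      (le_max_left _ _)
  have hC : #C < #(ResidueField T) :=
    (mk_union_le_of_aleph0_le (le_max_left _ _) (hfin I)
      (mk_biUnion_le_of_aleph0_le (le_max_left _ _) (le_max_right _ _) fun _ _ =>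
        hfin _)).trans_lt (max_lt hκ hN)
  have hheight : ∀ P ∈ C, P.height ≤ (n + 1 : ℕ) := by
    rintro P (hP | hP)
    · exact (height_le_of_spanRank_le hI.spanRank_le hP).trans (mod_cast n.le_succ)
    · obtain ⟨r, -, hP⟩ := Set.mem_iUnion₂.1 hP
      exact height_le_of_spanRank_le (spanRank_sup_span_singleton_le hI.spanRank_le r) hP
  obtain ⟨x, hxm, hx⟩ := exists_mem_forall_notMem hC (J := maximalIdeal T) fun P hP hle =>
    hdim.not_ge ((Ideal.height_mono hle).trans (hheight P hP))
  exact ⟨I ⊔ Ideal.span {x}, le_sup_left,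
    sup_le hIm ((Ideal.span_singleton_le_iff_mem _).2 hxm),
    hI.sup_span_singleton (fun P hP => hx P (Or.inl hP)) fun r hr P hP =>
      hx P (Or.inr (Set.mem_iUnion₂.2 ⟨r, hr, hP⟩))⟩

lemma IsPureAvoiding.exists_isPrime_height_eq (hκ : ℵ₀ < #(ResidueField T))
    (hN : #N < #(ResidueField T)) (hI : IsPureAvoiding N n I) (hIm : I ≤ maximalIdeal T)
    {D : ℕ} (hnD : n ≤ D) (hdim : D < (maximalIdeal T).height) :
    ∃ Q : Ideal T, Q.IsPrime ∧ Q.height = D ∧ I ≤ Q ∧ ∀ r ∈ N, r ∉ Q := by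
  obtain ⟨J, hIJ, hJm, hJ⟩ : ∃ J, I ≤ J ∧ J ≤ maximalIdeal T ∧ IsPureAvoiding N D J := by
    induction D, hnD using Nat.le_induction with
    | base => exact ⟨I, le_rfl, hIm, hI⟩
    | succ k _ ih =>
      obtain ⟨J, hIJ, hJm, hJ⟩ := ih (lt_of_le_of_lt (mod_cast k.le_succ) hdim)
      obtain ⟨J', hJJ', hJ'⟩ := hJ.exists_succ hκ hN hJm hdim
      exact ⟨J', hIJ.trans hJJ', hJ'⟩
  obtain ⟨Q, hQ, -⟩ := Ideal.exists_minimalPrimes_le hJm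
  exact ⟨Q, hQ.1.1, (height_le_of_spanRank_le hJ.spanRank_le hQ).antisymm (hJ.le_height Q hQ),
    hIJ.trans hQ.1.2, hJ.notMem Q hQ⟩

end Heights

section Gauss

open Polynomial

attribute [local instance] Polynomial.algebra in
lemma eq_span_singleton_of_prime_mem {R : Type*} [CommRing R] [IsDomain R]
    [UniqueFactorizationMonoid R] {q : Ideal R[X]} [q.IsPrime] (h0 : ∀ r : R, C r ∈ q → r = 0)
    {f : R[X]} (hf : Prime f) (hfq : f ∈ q) : q = Ideal.span {f} := by
  let K := FractionRing R
  let M := (nonZeroDivisors R).map (C : R →+* R[X])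
  have := Polynomial.isLocalization (nonZeroDivisors R) K
  have hprime : (Ideal.span {f}).IsPrime := (Ideal.span_singleton_prime hf.ne_zero).2 hf
  have hle : Ideal.span {f} ≤ q := (Ideal.span_singleton_le_iff_mem q).2 hfq
  have hdisj : Disjoint (M : Set R[X]) q := by
    rw [Set.disjoint_left]
    rintro _ ⟨r, hr, rfl⟩ hrq
    exact nonZeroDivisors.ne_zero hr (h0 r hrq)
  have hdeg : f.natDegree ≠ 0 := fun h => by
    rw [eq_C_of_natDegree_eq_zero h] at hfq hf
    exact (prime_C_iff.1 hf).ne_zero (h0 _ hfq)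
  have hirr : Irreducible (f.map (algebraMap R K)) :=
    ((hf.irreducible.isPrimitive hdeg).irreducible_iff_irreducible_map_fraction_map (K := K)).1
      hf.irreducible
  have hmax : ((Ideal.span {f}).map (algebraMap R[X] K[X])).IsMaximal := by
    rw [Ideal.map_span, Set.image_singleton]
    exact PrincipalIdealRing.isMaximal_of_irreducible hirr
  have hmap : (Ideal.span {f}).map (algebraMap R[X] K[X]) = q.map (algebraMap R[X] K[X]) :=
    hmax.eq_of_le (IsLocalization.isPrime_of_isPrime_disjoint M K[X] q ‹_› hdisj).ne_top
      (Ideal.map_mono hle)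
  rw [← IsLocalization.under_map_of_isPrime_disjoint M K[X] ‹q.IsPrime› hdisj, ← hmap,
    IsLocalization.under_map_of_isPrime_disjoint M K[X] hprime (hdisj.mono_right hle)]

end Gauss

section FractionClosed

variable {T : Type u} [CommRing T]

/-- `R` is the intersection of `T` with a field of fractions: nonzero elements of `R` are regular
in `T` and `R` contains every quotient of its elements that exists in `T`. -/
structure IsFractionClosed (R : Subring T) : Prop where
  mem_nonZeroDivisors : ∀ r ∈ R, r ≠ 0 → r ∈ nonZeroDivisors T
  mem_of_mul_mem : ∀ r ∈ R, r ≠ 0 → ∀ s, r * s ∈ R → s ∈ R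

/-- The subring `R` and the ideal `P` meet only in `0`. -/
def MeetsTrivially (R : Subring T) (P : Ideal T) : Prop :=
  ∀ r ∈ R, r ∈ P → r = 0

namespace IsFractionClosed

variable {R : Subring T}

lemma isDomain [Nontrivial T] (hR : IsFractionClosed R) : IsDomain R := by
  have : NoZeroDivisors R := ⟨fun {a b} hab => or_iff_not_imp_left.2 fun ha => Subtype.ext <|
    (mul_right_mem_nonZeroDivisors_eq_zero_iff
      (hR.mem_nonZeroDivisors a a.2 (Subtype.coe_ne_coe.2 ha))).1 <| by
        rw [mul_comm]
        exact congrArg Subtype.val hab⟩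
  exact NoZeroDivisors.to_isDomain R

lemma coe_mem_nonZeroDivisors (hR : IsFractionClosed R) {z : R} (hz : z ≠ 0) :
    (z : T) ∈ nonZeroDivisors T :=
  hR.mem_nonZeroDivisors z z.2 (Subtype.coe_ne_coe.2 hz)

lemma coe_dvd_coe (hR : IsFractionClosed R) {a b : R} : (a : T) ∣ b ↔ a ∣ b := by
  refine ⟨fun ⟨e, he⟩ => ?_, map_dvd R.subtype⟩
  obtain rfl | ha := eq_or_ne a 0
  · exact ⟨0, Subtype.ext (by simpa using he)⟩
  · exact ⟨⟨e, hR.mem_of_mul_mem a a.2 (Subtype.coe_ne_coe.2 ha) e (he ▸ b.2)⟩, Subtype.ext he⟩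

lemma isUnit_coe (hR : IsFractionClosed R) {a : R} : IsUnit (a : T) ↔ IsUnit a := by
  rw [isUnit_iff_dvd_one, isUnit_iff_dvd_one, ← hR.coe_dvd_coe, Subring.coe_one]

lemma prime_of_forall_dvd (hR : IsFractionClosed R) {f : R} (hf : f ≠ 0) {P : Ideal T}
    [hP : P.IsPrime] (hfP : (f : T) ∈ P) (hdvd : ∀ s : R, (s : T) ∈ P → (f : T) ∣ s) :
    Prime f := by
  refine ⟨hf, fun h => hP.ne_top (Ideal.eq_top_of_isUnit_mem P hfP (h.map R.subtype)), ?_⟩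
  intro s t hst
  have hmem : (s : T) * t ∈ P := P.mem_of_dvd (map_dvd R.subtype hst) hfP
  exact (hP.mem_or_mem hmem).imp (fun h => hR.coe_dvd_coe.1 (hdvd s h))
    fun h => hR.coe_dvd_coe.1 (hdvd t h)

lemma exists_prime_mem [Nontrivial T] (hR : IsFractionClosed R) [UniqueFactorizationMonoid R]
    {P : Ideal T} [P.IsPrime] (h : ¬ MeetsTrivially R P) : ∃ z : R, Prime z ∧ (z : T) ∈ P := by
  have := hR.isDomain
  simp only [MeetsTrivially, not_forall] at h
  obtain ⟨r, hr, hrP, hr0⟩ := h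
  have hne : P.comap R.subtype ≠ ⊥ := fun hbot => hr0 <| congrArg Subtype.val <|
    (Submodule.eq_bot_iff _).1 hbot ⟨r, hr⟩ hrP
  obtain ⟨z, hzP, hz⟩ := (Ideal.comap_isPrime R.subtype P).exists_mem_prime_of_ne_bot hne
  exact ⟨z, hz, hzP⟩

end IsFractionClosed

/-- `Frac(B) ∩ T`: the elements `a / b` of `T` with `a, b ∈ B` and `b` regular in `T`. -/
def fractionSubring (B : Subring T) : Subring T where
  carrier := {s | ∃ b ∈ B, b ∈ nonZeroDivisors T ∧ b * s ∈ B}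
  mul_mem' := by
    rintro s t ⟨b, hb, hb', hbs⟩ ⟨c, hc, hc', hct⟩
    exact ⟨b * c, mul_mem hb hc, mul_mem hb' hc', mul_mul_mul_comm b c s t ▸ mul_mem hbs hct⟩
  one_mem' := ⟨1, one_mem B, one_mem _, by simp⟩
  add_mem' := by
    rintro s t ⟨b, hb, hb', hbs⟩ ⟨c, hc, hc', hct⟩
    refine ⟨b * c, mul_mem hb hc, mul_mem hb' hc', ?_⟩
    convert add_mem (mul_mem hc hbs) (mul_mem hb hct) using 1
    ring
  zero_mem' := ⟨1, one_mem B, one_mem _, by simp⟩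
  neg_mem' := by
    rintro s ⟨b, hb, hb', hbs⟩
    exact ⟨b, hb, hb', mul_neg b s ▸ neg_mem hbs⟩

section FractionSubring

variable {B : Subring T}

lemma mem_fractionSubring {s : T} :
    s ∈ fractionSubring B ↔ ∃ b ∈ B, b ∈ nonZeroDivisors T ∧ b * s ∈ B :=
  Iff.rfl

lemma le_fractionSubring : B ≤ fractionSubring B :=
  fun b hb => ⟨1, one_mem B, one_mem _, by simpa⟩

lemma mem_fractionSubring_of_mul_mem {r s : T} (hr : r ∈ fractionSubring B)
    (hreg : r ∈ nonZeroDivisors T) (hrs : r * s ∈ fractionSubring B) : s ∈ fractionSubring B := by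
  obtain ⟨b, hb, hb', hbr⟩ := hr
  obtain ⟨c, hc, hc', hcrs⟩ := hrs
  refine ⟨c * (b * r), mul_mem hc hbr, mul_mem hc' (mul_mem hb' hreg), ?_⟩
  convert mul_mem hb hcrs using 1
  ring

lemma fractionSubring_le {B' : Subring T} (h : B ≤ fractionSubring B') :
    fractionSubring B ≤ fractionSubring B' := fun _ ⟨_, hb, hb', hbs⟩ =>
  mem_fractionSubring_of_mul_mem (h hb) hb' (h hbs)

lemma isFractionClosed_fractionSubring (hB : ∀ b ∈ B, b ≠ 0 → b ∈ nonZeroDivisors T) :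
    IsFractionClosed (fractionSubring B) := by
  have hreg : ∀ s ∈ fractionSubring B, s ≠ 0 → s ∈ nonZeroDivisors T := by
    rintro s ⟨b, -, hb', hbs⟩ hs
    refine (mul_mem_nonZeroDivisors.1 (hB _ hbs fun h => hs ?_)).2
    exact (mul_left_mem_nonZeroDivisors_eq_zero_iff hb').1 h
  exact ⟨hreg, fun r hr hr0 s hrs => mem_fractionSubring_of_mul_mem hr (hreg r hr hr0) hrs⟩

lemma mk_fractionSubring_le (B : Subring T) : #(fractionSubring B) ≤ #B * #B := by
  choose b hb hb' hbs using fun s : fractionSubring B => s.2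
  rw [← lift_id #B, ← mk_prod]
  refine mk_le_of_injective
    (f := fun s => ((⟨b s, hb s⟩ : B), (⟨b s * s, hbs s⟩ : B))) fun s t hst => ?_
  simp only [Prod.mk.injEq, Subtype.mk.injEq] at hst
  refine Subtype.ext ((mul_cancel_left_mem_nonZeroDivisors (hb' s)).1 ?_)
  rw [hst.2, hst.1]

end FractionSubring

/-- `Frac(R[x]) ∩ T`. -/
def fracAdjoin (R : Subring T) (x : T) : Subring T :=
  fractionSubring (Algebra.adjoin R {x}).toSubring

section FracAdjoin

open Polynomial

variable {R : Subring T} {x : T}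

lemma mem_fracAdjoin {s : T} : s ∈ fracAdjoin R x ↔
    ∃ a b : R[X], aeval x b ∈ nonZeroDivisors T ∧ aeval x b * s = aeval x a := by
  simp only [fracAdjoin, mem_fractionSubring, Subalgebra.mem_toSubring,
    Algebra.adjoin_singleton_eq_range_aeval, AlgHom.mem_range]
  constructor
  · rintro ⟨_, ⟨b, rfl⟩, hb, a, ha⟩
    exact ⟨a, b, hb, ha.symm⟩
  · rintro ⟨a, b, hb, ha⟩
    exact ⟨_, ⟨b, rfl⟩, hb, a, ha.symm⟩

lemma aeval_mem_fracAdjoin (p : R[X]) : aeval x p ∈ fracAdjoin R x :=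
  le_fractionSubring (aeval_mem_adjoin_singleton R x)

lemma le_fracAdjoin : R ≤ fracAdjoin R x := fun r hr => by
  have h := aeval_mem_fracAdjoin (x := x) (C (⟨r, hr⟩ : R))
  rwa [aeval_C] at h

lemma self_mem_fracAdjoin : x ∈ fracAdjoin R x := by
  simpa using aeval_mem_fracAdjoin (R := R) (x := x) X

lemma fracAdjoin_le_fracAdjoin {y : T} (hx : x ∈ fracAdjoin R y) :
    fracAdjoin R x ≤ fracAdjoin R y := by
  refine fractionSubring_le ?_
  rw [Algebra.adjoin_eq_ring_closure, Subring.closure_le]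
  rintro _ (⟨r, rfl⟩ | rfl)
  · exact le_fracAdjoin r.2
  · exact hx

lemma mk_fracAdjoin_le (R : Subring T) (x : T) : #(fracAdjoin R x) ≤ max ℵ₀ #R := by
  have hadjoin : #(Algebra.adjoin R {x}) ≤ max ℵ₀ #R := by
    rw [Algebra.adjoin_singleton_eq_range_aeval]
    exact mk_range_le.trans (cardinalMk_le_max.trans (max_comm _ _).le)
  calc #(fracAdjoin R x) ≤ max ℵ₀ #R * max ℵ₀ #R :=
        (mk_fractionSubring_le _).trans (mul_le_mul' hadjoin hadjoin)
    _ = max ℵ₀ #R := mul_eq_self (le_max_left _ _)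

lemma exists_isRelPrime_aeval_mul_eq [IsDomain R] [UniqueFactorizationMonoid R] [Nontrivial T]
    {s : T} (hs : s ∈ fracAdjoin R x) :
    ∃ a b : R[X], IsRelPrime a b ∧ aeval x b ∈ nonZeroDivisors T ∧ aeval x b * s = aeval x a := by
  obtain ⟨a, b, hb, h⟩ := mem_fracAdjoin.1 hs
  have hb0 : b ≠ 0 := by
    rintro rfl
    exact nonZeroDivisors.ne_zero hb (map_zero _)
  obtain ⟨a', b', c, hrel, rfl, rfl⟩ := UniqueFactorizationMonoid.exists_reduced_factors' a b hb0
  rw [map_mul] at hb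
  obtain ⟨hc, hb'⟩ := mul_mem_nonZeroDivisors.1 hb
  refine ⟨a', b', hrel, hb', (mul_cancel_left_mem_nonZeroDivisors hc).1 ?_⟩
  rw [← mul_assoc, ← map_mul, h, map_mul]

end FracAdjoin

end FractionClosed

section Stages

variable {T : Type u} [CommRing T]

/-- A stage of the transfinite construction: a subring of `T`, which approximates the UFD to be
built, together with the primes of `T` whose intersection with that subring is under control. -/
structure Stage (T : Type u) [CommRing T] where
  ring : Subring T
  primes : Set (Ideal T)

namespace Stage

/-- `q` extends `p`: prime elements stay prime, and the new controlled primes meet the old ring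
trivially. This is the order on stages. -/
structure IsExtension (p q : Stage T) : Prop where
  ring_le : p.ring ≤ q.ring
  primes_subset : p.primes ⊆ q.primes
  prime_inclusion : ∀ z : p.ring, Prime z → Prime (Subring.inclusion ring_le z)
  meetsTrivially : ∀ P ∈ q.primes, P ∉ p.primes → MeetsTrivially p.ring P

instance : Preorder (Stage T) where
  le := IsExtension
  le_refl _ := ⟨le_rfl, subset_rfl, fun _ hz => hz, fun _ h h' => absurd h h'⟩
  le_trans p q r h h' :=
    { ring_le := h.ring_le.trans h'.ring_le
      primes_subset := h.primes_subset.trans h'.primes_subset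
      prime_inclusion := fun z hz => h'.prime_inclusion _ (h.prime_inclusion z hz)
      meetsTrivially := fun P hP hPp => by
        by_cases hPq : P ∈ q.primes
        · exact h.meetsTrivially P hPq hPp
        · exact fun s hs => h'.meetsTrivially P hP hPq s (h.ring_le hs) }

/-- The smallest infinite cardinal bounding both components of a stage. -/
noncomputable def size (p : Stage T) : Cardinal.{u} :=
  max ℵ₀ (max #p.ring #p.primes)

lemma aleph0_le_size (p : Stage T) : ℵ₀ ≤ p.size :=
  le_max_left _ _

lemma mk_ring_le_size (p : Stage T) : #p.ring ≤ p.size :=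
  (le_max_left _ _).trans (le_max_right _ _)

lemma mk_primes_le_size (p : Stage T) : #p.primes ≤ p.size :=
  (le_max_right _ _).trans (le_max_right _ _)

lemma size_le {p : Stage T} {μ : Cardinal.{u}} (hμ : ℵ₀ ≤ μ) (hring : #p.ring ≤ μ)
    (hprimes : #p.primes ≤ μ) : p.size ≤ μ :=
  max_le hμ (max_le hring hprimes)

/-- The invariants of the construction: the ring of `p` is a UFD that meets `Q₀` trivially, and it
meets every controlled prime in `0` or in a principal prime. Every prime element lies in a
controlled prime of height `d`, the height wanted in the formal fibers over height one primes. -/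
structure IsGood (Q₀ : Ideal T) (d : ℕ) (p : Stage T) : Prop where
  isFractionClosed : IsFractionClosed p.ring
  ufm : UniqueFactorizationMonoid p.ring
  isPrime : ∀ P ∈ p.primes, P.IsPrime
  associatedPrimes_subset : associatedPrimes T T ⊆ p.primes
  mem_primes : Q₀ ∈ p.primes
  meetsTrivially : MeetsTrivially p.ring Q₀
  bound : ∀ P ∈ p.primes, P ∈ associatedPrimes T T ∨ P = Q₀ ∨
    P.height ≤ d ∧ ¬ MeetsTrivially p.ring P
  associatedPrimesMod_subset : ∀ z : p.ring, Prime z → associatedPrimesMod (z : T) ⊆ p.primes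
  exists_height_eq : ∀ z : p.ring, Prime z → ∃ Q ∈ p.primes, Q.height = d ∧ (z : T) ∈ Q
  dvd_of_mem : ∀ P ∈ p.primes, ∀ z r : p.ring, Prime z → (z : T) ∈ P → (r : T) ∈ P → z ∣ r

/-- A good extension of `p` that is not larger than `p`. -/
structure IsGoodExtension (Q₀ : Ideal T) (d : ℕ) (p q : Stage T) : Prop where
  isGood : q.IsGood Q₀ d
  le : p ≤ q
  size_le : q.size ≤ p.size

lemma IsGoodExtension.refl {Q₀ : Ideal T} {d : ℕ} {p : Stage T} (hp : p.IsGood Q₀ d) :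
    IsGoodExtension Q₀ d p p :=
  ⟨hp, le_rfl, le_rfl⟩

lemma IsGoodExtension.trans {Q₀ : Ideal T} {d : ℕ} {p q r : Stage T}
    (h : IsGoodExtension Q₀ d p q) (h' : IsGoodExtension Q₀ d q r) : IsGoodExtension Q₀ d p r :=
  ⟨h'.isGood, h.le.trans h'.le, h'.size_le.trans h.size_le⟩

end Stage

end Stages

section GenericElements

open Polynomial

variable {T : Type u} [CommRing T] {Q₀ : Ideal T} {d : ℕ} {p : Stage T} {x : T}

namespace Stage

/-- `x` is generic over `p`: it is transcendental over the ring of `p`, and `Frac(R[x]) ∩ T` meets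
the controlled primes in the ideals generated by what `R` contributes. -/
structure IsGeneric (p : Stage T) (x : T) : Prop where
  aeval_mem_nonZeroDivisors : ∀ b : p.ring[X], b ≠ 0 → aeval x b ∈ nonZeroDivisors T
  meetsTrivially : ∀ P ∈ p.primes, MeetsTrivially p.ring P →
    MeetsTrivially (fracAdjoin p.ring x) P
  dvd_of_mem : ∀ z : p.ring, Prime z → ∀ P ∈ p.primes, (z : T) ∈ P →
    ∀ s ∈ fracAdjoin p.ring x, s ∈ P → (z : T) ∣ s

/-- A linear relation `y₁ x₁ + y₂ x₂ = c` over the ring of `p` in which, modulo every controlled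
prime, `x₁` or `x₂` is transcendental, depending on whether `y₂` survives. -/
structure IsGenericRelation (p : Stage T) (x₁ x₂ : T) (y₁ y₂ c : p.ring) : Prop where
  eq : (y₁ : T) * x₁ + y₂ * x₂ = c
  ne_zero : y₂ ≠ 0
  notMem : ∀ P ∈ p.primes, (y₁ : T) ∈ P → (y₂ : T) ∉ P
  left : ∀ P ∈ p.primes, (y₂ : T) ∉ P → IsTranscendentalMod p.ring P x₁
  right : ∀ P ∈ p.primes, (y₂ : T) ∈ P → IsTranscendentalMod p.ring P x₂

lemma IsGood.dvd_of_mem_fracAdjoin [IsNoetherianRing T] [Nontrivial T]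
    (hp : p.IsGood Q₀ d) {z : p.ring} (hz : Prime z)
    (hx : ∀ P ∈ p.primes, (z : T) ∈ P → IsTranscendentalMod p.ring P x) {P : Ideal T}
    (hP : P ∈ p.primes) (hzP : (z : T) ∈ P) {s : T} (hs : s ∈ fracAdjoin p.ring x)
    (hsP : s ∈ P) : (z : T) ∣ s := by
  have := hp.isFractionClosed.isDomain
  have := hp.ufm
  have hdvd : ∀ P ∈ p.primes, (z : T) ∈ P → ∀ q : p.ring[X], aeval x q ∈ P → C z ∣ q :=
    fun P hP hzP q hq => C_dvd_iff_dvd_coeff _ _ |>.2 fun i =>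
      hp.dvd_of_mem P hP z _ hz hzP (hx P hP hzP q hq i)
  obtain ⟨a, b, hrel, -, h⟩ := exists_isRelPrime_aeval_mul_eq hs
  have hza : C z ∣ a := hdvd P hP hzP a (h ▸ P.mul_mem_left _ hsP)
  by_contra hzs
  have hmul : (z : T) ∣ aeval x b * s := by
    obtain ⟨e, rfl⟩ := hza
    rw [h, map_mul, aeval_C]
    exact dvd_mul_right _ _
  obtain ⟨P', hP', hbP'⟩ := exists_mem_associatedPrimesMod hmul hzs
  have hzb : C z ∣ b := hdvd P' (hp.associatedPrimesMod_subset z hz hP')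
    (mem_of_mem_associatedPrimesMod hP') b hbP'
  exact hz.not_isUnit (isUnit_C.1 (hrel hza hzb))

variable {x₁ x₂ : T} {y₁ y₂ c : p.ring}

namespace IsGenericRelation

lemma left_mem_fracAdjoin (hx : p.IsGenericRelation x₁ x₂ y₁ y₂ c)
    (hy₁ : (y₁ : T) ∈ nonZeroDivisors T) : x₁ ∈ fracAdjoin p.ring x₂ := by
  refine mem_fractionSubring_of_mul_mem (le_fracAdjoin y₁.2) hy₁ ?_
  rw [eq_sub_of_add_eq hx.eq]
  exact sub_mem (le_fracAdjoin c.2) (mul_mem (le_fracAdjoin y₂.2) self_mem_fracAdjoin)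

lemma right_mem_fracAdjoin (hx : p.IsGenericRelation x₁ x₂ y₁ y₂ c)
    (hy₂ : (y₂ : T) ∈ nonZeroDivisors T) : x₂ ∈ fracAdjoin p.ring x₁ := by
  refine mem_fractionSubring_of_mul_mem (le_fracAdjoin y₂.2) hy₂ ?_
  rw [eq_sub_of_add_eq' hx.eq]
  exact sub_mem (le_fracAdjoin c.2) (mul_mem (le_fracAdjoin y₁.2) self_mem_fracAdjoin)

variable [IsNoetherianRing T] [Nontrivial T]

lemma dvd_of_mem (hx : p.IsGenericRelation x₁ x₂ y₁ y₂ c) (hp : p.IsGood Q₀ d)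
    {z : p.ring} (hz : Prime z) {P : Ideal T} (hP : P ∈ p.primes) (hzP : (z : T) ∈ P) {s : T}
    (hs : s ∈ fracAdjoin p.ring x₁) (hsP : s ∈ P) : (z : T) ∣ s := by
  by_cases hzy : z ∣ y₂
  · have hy₂ : ∀ P : Ideal T, (z : T) ∈ P → (y₂ : T) ∈ P := fun P =>
      P.mem_of_dvd (map_dvd p.ring.subtype hzy)
    have hy₁ : y₁ ≠ 0 := by
      rintro rfl
      exact hx.notMem P hP (zero_mem _) (hy₂ P hzP)
    exact hp.dvd_of_mem_fracAdjoin hz (fun P' hP' hz' => hx.right P' hP' (hy₂ P' hz')) hP hzP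
      (fracAdjoin_le_fracAdjoin
        (hx.left_mem_fracAdjoin (hp.isFractionClosed.coe_mem_nonZeroDivisors hy₁)) hs) hsP
  · exact hp.dvd_of_mem_fracAdjoin hz (fun P' hP' hz' => hx.left P' hP' fun h =>
      hzy (hp.dvd_of_mem P' hP' z y₂ hz hz' h)) hP hzP hs hsP

lemma isGeneric (hx : p.IsGenericRelation x₁ x₂ y₁ y₂ c) (hp : p.IsGood Q₀ d) :
    p.IsGeneric x₁ where
  aeval_mem_nonZeroDivisors b hb := by
    have hR := hp.isFractionClosed
    refine mem_nonZeroDivisors_iff_forall_associatedPrimes.2 fun P hP hbP => hb ?_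
    have hreg : ∀ r : p.ring, (r : T) ∈ P → r = 0 := fun r hr => by_contra fun hr0 =>
      mem_nonZeroDivisors_iff_forall_associatedPrimes.1 (hR.coe_mem_nonZeroDivisors hr0) P hP hr
    ext1 i
    exact hreg _ (hx.left P (hp.associatedPrimes_subset hP) (hx.ne_zero ∘ hreg y₂) b hbP i)
  meetsTrivially P hP hRP s hs hsP := by
    obtain ⟨a, b, hb, h⟩ := mem_fracAdjoin.1 hs
    have haP : aeval x₁ a ∈ P := h ▸ P.mul_mem_left _ hsP
    have ha : a = 0 := by
      ext1 i
      exact Subtype.ext (hRP _ (a.coeff i).2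
        (hx.left P hP (fun hy => hx.ne_zero (Subtype.ext (hRP _ y₂.2 hy))) a haP i))
    rw [ha, map_zero] at h
    exact (mul_left_mem_nonZeroDivisors_eq_zero_iff hb).1 h
  dvd_of_mem _ hz _ hP hzP _ hs hsP := hx.dvd_of_mem hp hz hP hzP hs hsP

end IsGenericRelation

end Stage

end GenericElements

section NewElements

variable {T : Type u} [CommRing T]

/-- `f` is not divisible by any prime element of `R`. -/
def IsNew (R : Subring T) (f : T) : Prop :=
  ∀ z : R, Prime z → ¬ (z : T) ∣ f

lemma exists_eq_mul_isNew [IsNoetherianRing T] {R S : Subring T} (hR : IsFractionClosed R)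
    (hS : IsFractionClosed S) (hRS : R ≤ S) {f : T} (hf : f ∈ S) (hf0 : f ≠ 0) :
    ∃ w ∈ R, w ≠ 0 ∧ ∃ g ∈ S, f = w * g ∧ IsNew R g := by
  have : Nontrivial T := nontrivial_of_ne f 0 hf0
  induction hI : Ideal.span {f} using WellFoundedGT.induction generalizing f with
  | ind I ih =>
    by_cases hnew : IsNew R f
    · exact ⟨1, one_mem R, one_ne_zero, f, hf, (one_mul f).symm, hnew⟩
    simp only [IsNew, not_forall, not_not] at hnew
    obtain ⟨z, hz, e, rfl⟩ := hnew
    have he : e ∈ S := hS.mem_of_mul_mem z (hRS z.2) (Subtype.coe_ne_coe.2 hz.ne_zero) e hf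
    have he0 : e ≠ 0 := right_ne_zero_of_mul hf0
    have hlt : I < Ideal.span {e} := by
      rw [← hI, lt_iff_le_not_ge, Ideal.span_singleton_le_span_singleton,
        Ideal.span_singleton_le_span_singleton]
      refine ⟨dvd_mul_left e z, fun ⟨v, hv⟩ => hz.not_isUnit (hR.isUnit_coe.1 ?_)⟩
      refine IsUnit.of_mul_eq_one v
        ((mul_cancel_left_mem_nonZeroDivisors (hS.mem_nonZeroDivisors e he he0)).1 ?_)
      rw [mul_one, mul_left_comm, ← mul_assoc, ← hv]
    obtain ⟨w, hw, hw0, g, hg, heq, hnew⟩ := ih _ hlt he he0 rfl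
    refine ⟨z * w, mul_mem z.2 hw, fun h => hw0 ?_, g, hg, by rw [mul_assoc, ← heq], hnew⟩
    exact (mul_left_mem_nonZeroDivisors_eq_zero_iff (hR.coe_mem_nonZeroDivisors hz.ne_zero)).1 h

open Polynomial in
lemma exists_prime_aeval_mem {R : Subring T} [IsDomain R] [UniqueFactorizationMonoid R] {x : T}
    {I : Ideal (fracAdjoin R x)} [I.IsPrime] (hI : I ≠ ⊥) :
    ∃ g : R[X], Prime g ∧ (⟨aeval x g, aeval_mem_fracAdjoin g⟩ : fracAdjoin R x) ∈ I := by
  let ev : R[X] →+* fracAdjoin R x :=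
    (aeval x : R[X] →ₐ[R] T).toRingHom.codRestrict _ aeval_mem_fracAdjoin
  obtain ⟨s, hs, hs0⟩ := Submodule.exists_mem_ne_zero_of_ne_bot hI
  obtain ⟨a, b, hb, h⟩ := mem_fracAdjoin.1 s.2
  have ha : a ∈ I.comap ev := by
    have hev : ev a = ev b * s := Subtype.ext h.symm
    rw [Ideal.mem_comap, hev]
    exact I.mul_mem_left _ hs
  have ha0 : a ≠ 0 := by
    rintro rfl
    rw [map_zero, mul_left_mem_nonZeroDivisors_eq_zero_iff hb] at h
    exact hs0 (Subtype.ext h)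
  obtain ⟨g, hgI, hg⟩ := (Ideal.comap_isPrime ev I).exists_mem_prime_of_ne_bot fun hbot =>
    ha0 (by rwa [hbot, Ideal.mem_bot] at ha)
  exact ⟨g, hg, hgI⟩

open Polynomial in
lemma dvd_of_mem_of_dvd_aeval [IsNoetherianRing T] [Nontrivial T] {R : Subring T} [IsDomain R]
    [UniqueFactorizationMonoid R] {x f : T} {g : R[X]} (hg : Prime g) (hfg : f ∣ aeval x g)
    (hf : ∀ P ∈ associatedPrimesMod f, MeetsTrivially R P) {P : Ideal T} [P.IsPrime] (hfP : f ∈ P)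
    (hP : MeetsTrivially R P) {s : T} (hs : s ∈ fracAdjoin R x) (hsP : s ∈ P) : f ∣ s := by
  have hdvd : ∀ P : Ideal T, P.IsPrime → f ∈ P → MeetsTrivially R P → ∀ q : R[X],
      aeval x q ∈ P → g ∣ q := by
    intro P _ hfP hP q hq
    have hspan : P.comap (aeval x : R[X] →ₐ[R] T) = Ideal.span {g} :=
      eq_span_singleton_of_prime_mem
        (fun r hr => Subtype.ext (hP r r.2 (by rwa [Ideal.mem_comap, aeval_C] at hr))) hg
        (P.mem_of_dvd hfg hfP)
    exact Ideal.mem_span_singleton.1 (hspan ▸ hq)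
  obtain ⟨a, b, hrel, -, h⟩ := exists_isRelPrime_aeval_mul_eq hs
  have hga : g ∣ a := hdvd P ‹_› hfP hP a (h ▸ P.mul_mem_left _ hsP)
  by_contra hfs
  obtain ⟨P', hP', hbP'⟩ := exists_mem_associatedPrimesMod
    (h ▸ hfg.trans (map_dvd (aeval x) hga) : f ∣ aeval x b * s) hfs
  have hgb : g ∣ b := hdvd P' (IsAssociatedPrime.isPrime hP') (mem_of_mem_associatedPrimesMod hP')
    (hf P' hP') b hbP'
  exact hg.not_isUnit (hrel hga hgb)

end NewElements

section Extension

/-- The numerical hypotheses on `d`: a nonzero principal ideal generated by a regular element has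
no associated primes of height larger than `d`, and `1 ≤ d < dim T`. -/
structure IsAdmissibleHeight (T : Type u) [CommRing T] [IsLocalRing T] (d : ℕ) : Prop where
  one_le : 1 ≤ d
  lt_height : d < (maximalIdeal T).height
  height_le : ∀ z ∈ nonZeroDivisors T, ∀ P ∈ associatedPrimesMod z, P.height ≤ d

open Polynomial

variable {T : Type u} [CommRing T] {Q₀ : Ideal T} {d : ℕ} {p : Stage T} {x : T}

namespace Stage.IsGeneric

lemma isFractionClosed (hx : p.IsGeneric x) : IsFractionClosed (fracAdjoin p.ring x) := by
  refine isFractionClosed_fractionSubring fun b hb hb0 => ?_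
  rw [Subalgebra.mem_toSubring, Algebra.adjoin_singleton_eq_range_aeval] at hb
  obtain ⟨q, rfl⟩ := hb
  exact hx.aeval_mem_nonZeroDivisors q fun h => hb0 (by rw [h]; exact map_zero (aeval x))

lemma prime_inclusion [IsNoetherianRing T] (hx : p.IsGeneric x) (hp : p.IsGood Q₀ d) {z : p.ring}
    (hz : Prime z) : Prime (Subring.inclusion (le_fracAdjoin (x := x)) z) := by
  obtain ⟨P, hP⟩ :=
    associatedPrimesMod_nonempty (hp.isFractionClosed.isUnit_coe.not.2 hz.not_isUnit)
  have := IsAssociatedPrime.isPrime hP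
  have hzP := mem_of_mem_associatedPrimesMod hP
  exact hx.isFractionClosed.prime_of_forall_dvd
    (fun h => hz.ne_zero (Subring.inclusion_injective _ h)) hzP fun s hs =>
      hx.dvd_of_mem z hz P (hp.associatedPrimesMod_subset z hz hP) hzP s s.2 hs

variable [Nontrivial T]

lemma exists_prime_dvd_aeval (hx : p.IsGeneric x) (hp : p.IsGood Q₀ d)
    {f : fracAdjoin p.ring x} (hf : Prime f) : ∃ g : p.ring[X], Prime g ∧ (f : T) ∣ aeval x g := by
  have := hp.isFractionClosed.isDomain
  have := hp.ufm
  have := hx.isFractionClosed.isDomain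
  have : (Ideal.span {f}).IsPrime := (Ideal.span_singleton_prime hf.ne_zero).2 hf
  obtain ⟨g, hg, hgf⟩ := exists_prime_aeval_mem (I := Ideal.span {f})
    (by rw [Ne, Ideal.span_singleton_eq_bot]; exact hf.ne_zero)
  exact ⟨g, hg, hx.isFractionClosed.coe_dvd_coe.2 (Ideal.mem_span_singleton.1 hgf)⟩

variable [IsNoetherianRing T]

lemma meetsTrivially_of_isNew (hx : p.IsGeneric x) (hp : p.IsGood Q₀ d) {f : T}
    (hf : f ∈ fracAdjoin p.ring x) (hf0 : f ≠ 0) (hnew : IsNew p.ring f) {P : Ideal T}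
    (hP : P ∈ associatedPrimesMod f) : MeetsTrivially p.ring P := by
  by_contra hRP
  have := IsAssociatedPrime.isPrime hP
  have := hp.ufm
  obtain ⟨z, hz, hzP⟩ := hp.isFractionClosed.exists_prime_mem hRP
  have hPz : P ∈ associatedPrimesMod (z : T) :=
    mem_associatedPrimesMod_of_mem (hx.isFractionClosed.mem_nonZeroDivisors f hf hf0)
      (hp.isFractionClosed.coe_mem_nonZeroDivisors hz.ne_zero) hP hzP
  exact hnew z hz (hx.dvd_of_mem z hz P (hp.associatedPrimesMod_subset z hz hPz) hzP f hf
    (mem_of_mem_associatedPrimesMod hP))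

lemma prime_of_isNew (hx : p.IsGeneric x) (hp : p.IsGood Q₀ d) {f : fracAdjoin p.ring x}
    (hf : ¬ IsUnit f) (hf0 : f ≠ 0) (hnew : IsNew p.ring (f : T)) {g : p.ring[X]} (hg : Prime g)
    (hfg : (f : T) ∣ aeval x g) : Prime f := by
  have := hp.isFractionClosed.isDomain
  have := hp.ufm
  obtain ⟨P, hP⟩ := associatedPrimesMod_nonempty (hx.isFractionClosed.isUnit_coe.not.2 hf)
  have := IsAssociatedPrime.isPrime hP
  have hfP := mem_of_mem_associatedPrimesMod hP
  have htriv := fun P hP => hx.meetsTrivially_of_isNew hp f.2 (Subtype.coe_ne_coe.2 hf0) hnew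
    (P := P) hP
  exact hx.isFractionClosed.prime_of_forall_dvd hf0 hfP fun s hs =>
    dvd_of_mem_of_dvd_aeval hg hfg htriv hfP (htriv P hP) s.2 hs

lemma uniqueFactorizationMonoid (hx : p.IsGeneric x) (hp : p.IsGood Q₀ d) :
    UniqueFactorizationMonoid (fracAdjoin p.ring x) := by
  have := hx.isFractionClosed.isDomain
  have := hp.isFractionClosed.isDomain
  have := hp.ufm
  rw [UniqueFactorizationMonoid.iff_exists_prime_mem_of_isPrime]
  intro I hI _
  let ι := Subring.inclusion (le_fracAdjoin (R := p.ring) (x := x))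
  by_cases hcomap : I.comap ι = ⊥
  · obtain ⟨g, hg, hgI⟩ := exists_prime_aeval_mem hI
    obtain ⟨w, hw, hw0, f, hf, hgf, hnew⟩ := exists_eq_mul_isNew hp.isFractionClosed
      hx.isFractionClosed le_fracAdjoin (aeval_mem_fracAdjoin g)
      (nonZeroDivisors.ne_zero (hx.aeval_mem_nonZeroDivisors g hg.ne_zero))
    have hfI : (⟨f, hf⟩ : fracAdjoin p.ring x) ∈ I := by
      refine (Ideal.IsPrime.mem_or_mem ‹_› (x := ι ⟨w, hw⟩) ?_).resolve_left fun h => hw0 ?_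
      · convert hgI using 1
        exact Subtype.ext hgf.symm
      · exact congrArg Subtype.val ((Submodule.eq_bot_iff _).1 hcomap ⟨w, hw⟩ h)
    refine ⟨_, hfI, hx.prime_of_isNew hp (fun h => ?_) (fun h => ?_) hnew hg
      (hgf ▸ dvd_mul_left f w)⟩
    · exact Ideal.IsPrime.ne_top ‹_› (Ideal.eq_top_of_isUnit_mem I hfI h)
    · refine nonZeroDivisors.ne_zero (hx.aeval_mem_nonZeroDivisors g hg.ne_zero) ?_
      rw [hgf, show f = 0 from congrArg Subtype.val h, mul_zero]
  · obtain ⟨z, hzI, hz⟩ := (Ideal.comap_isPrime ι I).exists_mem_prime_of_ne_bot hcomap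
    exact ⟨ι z, hzI, hx.prime_inclusion hp hz⟩

end Stage.IsGeneric

namespace Stage

/-- The prime elements of `Frac(R[x]) ∩ T` that are not associated to one of `R`. -/
def newPrimes (p : Stage T) (x : T) : Set (fracAdjoin p.ring x) :=
  {f | Prime f ∧ IsNew p.ring (f : T)}

/-- The extension of the ring of `p` by a generic element `x`, controlling in addition the
associated primes of `T / fT` and the prime `Q f` for each new prime element `f`. -/
def adjoin (p : Stage T) (x : T) (Q : fracAdjoin p.ring x → Ideal T) : Stage T where
  ring := fracAdjoin p.ring x
  primes := p.primes ∪ ⋃ f ∈ p.newPrimes x, insert (Q f) (associatedPrimesMod (f : T))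

variable {Q : fracAdjoin p.ring x → Ideal T}

lemma mem_primes_adjoin {P : Ideal T} : P ∈ (p.adjoin x Q).primes ↔
    P ∈ p.primes ∨ ∃ f ∈ p.newPrimes x, P = Q f ∨ P ∈ associatedPrimesMod (f : T) := by
  simp only [adjoin, Set.mem_union, Set.mem_iUnion, Set.mem_insert_iff, exists_prop]

variable [IsNoetherianRing T]

lemma size_adjoin_le (p : Stage T) (x : T) (Q : fracAdjoin p.ring x → Ideal T) :
    (p.adjoin x Q).size ≤ p.size := by
  have hring : #(fracAdjoin p.ring x) ≤ p.size :=
    (mk_fracAdjoin_le p.ring x).trans (max_le p.aleph0_le_size p.mk_ring_le_size)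
  refine size_le p.aleph0_le_size hring (mk_union_le_of_aleph0_le p.aleph0_le_size
    p.mk_primes_le_size (mk_biUnion_le_of_aleph0_le p.aleph0_le_size
      ((mk_set_le _).trans hring) fun f _ => ?_))
  have hfin : (insert (Q f) (associatedPrimesMod (f : T))).Finite :=
    (associatedPrimes.finite T _).insert (Q f)
  exact hfin.countable.le_aleph0.trans p.aleph0_le_size

/-- `Q f` is, for each new prime element `f`, the prime of height `d` containing `f` that the
invariants of a good stage ask for. -/
structure IsPrimeSelection (d : ℕ) (p : Stage T) (x : T) (Q : fracAdjoin p.ring x → Ideal T) :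
    Prop where
  isPrime : ∀ f ∈ p.newPrimes x, (Q f).IsPrime
  height_eq : ∀ f ∈ p.newPrimes x, (Q f).height = d
  mem : ∀ f ∈ p.newPrimes x, (f : T) ∈ Q f
  meetsTrivially : ∀ f ∈ p.newPrimes x, MeetsTrivially p.ring (Q f)

lemma IsGeneric.exists_isPrimeSelection [IsLocalRing T] (hx : p.IsGeneric x) (hp : p.IsGood Q₀ d)
    (hd : IsAdmissibleHeight T d) (hsize : p.size < #(ResidueField T)) :
    ∃ Q, IsPrimeSelection d p x Q := by
  have hS := hx.isFractionClosed
  have hN : #{r | r ∈ p.ring ∧ r ≠ 0} < #(ResidueField T) :=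
    ((mk_le_mk_of_subset fun r hr => hr.1).trans p.mk_ring_le_size).trans_lt hsize
  have hexists : ∀ f ∈ p.newPrimes x, ∃ Q : Ideal T, Q.IsPrime ∧ Q.height = d ∧ (f : T) ∈ Q ∧
      MeetsTrivially p.ring Q := by
    intro f hf
    have hfreg := hS.coe_mem_nonZeroDivisors hf.1.ne_zero
    have hfm : (f : T) ∈ maximalIdeal T := hS.isUnit_coe.not.2 hf.1.not_isUnit
    obtain ⟨Q, hQ, hheight, hfQ, hQN⟩ := (isPureAvoiding_span_singleton hfreg
      fun P hP r hr hrP => hr.2 (hx.meetsTrivially_of_isNew hp f.2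
        (Subtype.coe_ne_coe.2 hf.1.ne_zero) hf.2 hP r hr.1 hrP)).exists_isPrime_height_eq
      (p.aleph0_le_size.trans_lt hsize) hN ((Ideal.span_singleton_le_iff_mem _).2 hfm)
      hd.one_le hd.lt_height
    exact ⟨Q, hQ, hheight, (Ideal.span_singleton_le_iff_mem _).1 hfQ,
      fun r hr hrQ => by_contra fun hr0 => hQN r ⟨hr, hr0⟩ hrQ⟩
  choose! Q hQ using hexists
  exact ⟨Q, fun f hf => (hQ f hf).1, fun f hf => (hQ f hf).2.1, fun f hf => (hQ f hf).2.2.1,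
    fun f hf => (hQ f hf).2.2.2⟩

variable [Nontrivial T]

lemma IsGeneric.exists_associated_of_not_isNew (hx : p.IsGeneric x) (hp : p.IsGood Q₀ d)
    {f : fracAdjoin p.ring x} (hf : Prime f) (hnew : ¬ IsNew p.ring (f : T)) :
    ∃ z : p.ring, Prime z ∧ Associated (z : T) f := by
  simp only [IsNew, not_forall, not_not] at hnew
  obtain ⟨z, hz, hzf⟩ := hnew
  have := hx.isFractionClosed.isDomain
  have hassoc := (hx.prime_inclusion hp hz).associated_of_dvd hf
    (hx.isFractionClosed.coe_dvd_coe.1 hzf)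
  exact ⟨z, hz, hassoc.map (fracAdjoin p.ring x).subtype⟩

lemma IsGeneric.associatedPrimesMod_subset_adjoin (hx : p.IsGeneric x) (hp : p.IsGood Q₀ d)
    {f : fracAdjoin p.ring x} (hf : Prime f) :
    associatedPrimesMod (f : T) ⊆ (p.adjoin x Q).primes := by
  intro P hP
  rw [mem_primes_adjoin]
  by_cases hnew : IsNew p.ring (f : T)
  · exact Or.inr ⟨f, ⟨hf, hnew⟩, Or.inr hP⟩
  · obtain ⟨z, hz, hzf⟩ := hx.exists_associated_of_not_isNew hp hf hnew
    refine Or.inl (hp.associatedPrimesMod_subset z hz ?_)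
    have hfS := hx.isFractionClosed.coe_mem_nonZeroDivisors hf.ne_zero
    exact mem_associatedPrimesMod_of_mem hfS
      (hp.isFractionClosed.coe_mem_nonZeroDivisors hz.ne_zero) hP
      (P.mem_of_dvd hzf.symm.dvd (mem_of_mem_associatedPrimesMod hP))

namespace IsPrimeSelection

lemma mem_primes_or_exists_mem (hQ : IsPrimeSelection d p x Q) (hx : p.IsGeneric x)
    (hp : p.IsGood Q₀ d)
    (hd : ∀ z ∈ nonZeroDivisors T, ∀ P ∈ associatedPrimesMod z, P.height ≤ d) {P : Ideal T}
    (hP : P ∈ (p.adjoin x Q).primes) : P ∈ p.primes ∨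
      ∃ f ∈ p.newPrimes x, P.IsPrime ∧ P.height ≤ d ∧ (f : T) ∈ P ∧ MeetsTrivially p.ring P := by
  refine (mem_primes_adjoin.1 hP).imp_right ?_
  rintro ⟨f, hf, rfl | h⟩
  · exact ⟨f, hf, hQ.isPrime f hf, (hQ.height_eq f hf).le, hQ.mem f hf, hQ.meetsTrivially f hf⟩
  · exact ⟨f, hf, IsAssociatedPrime.isPrime h,
      hd f (hx.isFractionClosed.coe_mem_nonZeroDivisors hf.1.ne_zero) P h,
      mem_of_mem_associatedPrimesMod h,
      hx.meetsTrivially_of_isNew hp f.2 (Subtype.coe_ne_coe.2 hf.1.ne_zero) hf.2 h⟩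

lemma le_adjoin (hQ : IsPrimeSelection d p x Q) (hx : p.IsGeneric x) (hp : p.IsGood Q₀ d)
    (hd : ∀ z ∈ nonZeroDivisors T, ∀ P ∈ associatedPrimesMod z, P.height ≤ d) :
    p ≤ p.adjoin x Q where
  ring_le := le_fracAdjoin
  primes_subset := Set.subset_union_left
  prime_inclusion _ hz := hx.prime_inclusion hp hz
  meetsTrivially P hP hPp := by
    obtain h | ⟨f, -, -, -, -, h⟩ := hQ.mem_primes_or_exists_mem hx hp hd hP
    · exact absurd h hPp
    · exact h

lemma exists_prime_forall_dvd (hQ : IsPrimeSelection d p x Q) (hx : p.IsGeneric x)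
    (hp : p.IsGood Q₀ d)
    (hd : ∀ z ∈ nonZeroDivisors T, ∀ P ∈ associatedPrimesMod z, P.height ≤ d) {P : Ideal T}
    (hP : P ∈ (p.adjoin x Q).primes) (hPx : ¬ MeetsTrivially (fracAdjoin p.ring x) P) :
    ∃ z : fracAdjoin p.ring x, Prime z ∧ ∀ s : fracAdjoin p.ring x, (s : T) ∈ P → z ∣ s := by
  have := hp.isFractionClosed.isDomain
  have := hp.ufm
  simp only [← hx.isFractionClosed.coe_dvd_coe]
  obtain h | ⟨f, hf, hprime, -, hfP, hRP⟩ := hQ.mem_primes_or_exists_mem hx hp hd hP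
  · have := hp.isPrime P h
    obtain ⟨z, hz, hzP⟩ := hp.isFractionClosed.exists_prime_mem (mt (hx.meetsTrivially P h) hPx)
    exact ⟨_, hx.prime_inclusion hp hz, fun s hs => hx.dvd_of_mem z hz P h hzP s s.2 hs⟩
  · obtain ⟨g, hg, hfg⟩ := hx.exists_prime_dvd_aeval hp hf.1
    have htriv := fun P hP => hx.meetsTrivially_of_isNew hp f.2
      (Subtype.coe_ne_coe.2 hf.1.ne_zero) hf.2 (P := P) hP
    exact ⟨f, hf.1, fun s hs => dvd_of_mem_of_dvd_aeval hg hfg htriv hfP hRP s.2 hs⟩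

lemma exists_height_eq (hQ : IsPrimeSelection d p x Q) (hx : p.IsGeneric x) (hp : p.IsGood Q₀ d)
    {f : fracAdjoin p.ring x} (hf : Prime f) :
    ∃ P ∈ (p.adjoin x Q).primes, P.height = d ∧ (f : T) ∈ P := by
  by_cases hnew : IsNew p.ring (f : T)
  · exact ⟨Q f, mem_primes_adjoin.2 (Or.inr ⟨f, ⟨hf, hnew⟩, Or.inl rfl⟩),
      hQ.height_eq f ⟨hf, hnew⟩, hQ.mem f ⟨hf, hnew⟩⟩
  · obtain ⟨z, hz, hzf⟩ := hx.exists_associated_of_not_isNew hp hf hnew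
    obtain ⟨P, hP, hheight, hzP⟩ := hp.exists_height_eq z hz
    exact ⟨P, Or.inl hP, hheight, P.mem_of_dvd hzf.dvd hzP⟩

lemma isGood_adjoin (hQ : IsPrimeSelection d p x Q) (hx : p.IsGeneric x) (hp : p.IsGood Q₀ d)
    (hd : ∀ z ∈ nonZeroDivisors T, ∀ P ∈ associatedPrimesMod z, P.height ≤ d) :
    (p.adjoin x Q).IsGood Q₀ d where
  isFractionClosed := hx.isFractionClosed
  ufm := hx.uniqueFactorizationMonoid hp
  isPrime P hP := by
    obtain h | ⟨f, -, h, -⟩ := hQ.mem_primes_or_exists_mem hx hp hd hP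
    · exact hp.isPrime P h
    · exact h
  associatedPrimes_subset P hP := Or.inl (hp.associatedPrimes_subset hP)
  mem_primes := Or.inl hp.mem_primes
  meetsTrivially := hx.meetsTrivially Q₀ hp.mem_primes hp.meetsTrivially
  bound P hP := by
    obtain h | ⟨f, hf, -, hheight, hfP, -⟩ := hQ.mem_primes_or_exists_mem hx hp hd hP
    · exact (hp.bound P h).imp_right (Or.imp_right (And.imp_right
        (mt fun h r hr => h r (le_fracAdjoin hr))))
    · exact Or.inr (Or.inr ⟨hheight, fun h => hf.1.ne_zero (Subtype.ext (h f f.2 hfP))⟩)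
  associatedPrimesMod_subset f hf := hx.associatedPrimesMod_subset_adjoin hp hf
  exists_height_eq f hf := hQ.exists_height_eq hx hp hf
  dvd_of_mem P hP f r hf hfP hrP := by
    have := hx.isFractionClosed.isDomain
    obtain ⟨z, hz, hdvd⟩ := hQ.exists_prime_forall_dvd hx hp hd hP fun h =>
      hf.ne_zero (Subtype.ext (h f f.2 hfP))
    exact (hz.associated_of_dvd hf (hdvd f hfP)).symm.dvd.trans (hdvd r hrP)

end IsPrimeSelection

end Stage

end Extension

section GoodExtension

variable {T : Type u} [CommRing T] [IsNoetherianRing T] [IsLocalRing T] {Q₀ : Ideal T} {d : ℕ}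
  {p : Stage T}

namespace Stage

lemma IsGeneric.exists_isGoodExtension {x : T} (hx : p.IsGeneric x) (hp : p.IsGood Q₀ d)
    (hd : IsAdmissibleHeight T d) (hsize : p.size < #(ResidueField T)) :
    ∃ q, IsGoodExtension Q₀ d p q ∧ q.ring = fracAdjoin p.ring x := by
  obtain ⟨Q, hQ⟩ := hx.exists_isPrimeSelection hp hd hsize
  exact ⟨p.adjoin x Q, ⟨hQ.isGood_adjoin hx hp hd.height_le, hQ.le_adjoin hx hp hd.height_le,
    size_adjoin_le p x Q⟩, rfl⟩

lemma IsGenericRelation.exists_isGoodExtension {x₁ x₂ : T} {y₁ y₂ c : p.ring}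
    (hx : p.IsGenericRelation x₁ x₂ y₁ y₂ c) (hp : p.IsGood Q₀ d) (hd : IsAdmissibleHeight T d)
    (hsize : p.size < #(ResidueField T)) :
    ∃ q, IsGoodExtension Q₀ d p q ∧ x₁ ∈ q.ring ∧ x₂ ∈ q.ring := by
  obtain ⟨q, hq, hring⟩ := (hx.isGeneric hp).exists_isGoodExtension hp hd hsize
  exact ⟨q, hq, hring ▸ self_mem_fracAdjoin, hring ▸
    hx.right_mem_fracAdjoin (hp.isFractionClosed.coe_mem_nonZeroDivisors hx.ne_zero)⟩

end Stage

end GoodExtension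

section Steps

lemma exists_forall_dvd_forall_prime_exists_not_dvd {R : Type*} [CommRing R] [IsDomain R]
    [UniqueFactorizationMonoid R] {s : Set R} (hs : s.Finite) (hs0 : ∃ r ∈ s, r ≠ 0) :
    ∃ g : R, g ≠ 0 ∧ (∀ r ∈ s, g ∣ r) ∧ ∀ z, Prime z → ∃ b, g * b ∈ s ∧ ¬ z ∣ b := by
  obtain ⟨_⟩ : Nonempty (NormalizedGCDMonoid R) := inferInstance
  obtain ⟨r, hrs, hr⟩ := hs0
  have hdvd : ∀ r ∈ s, hs.toFinset.gcd id ∣ r := fun r hr =>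
    Finset.gcd_dvd (hs.mem_toFinset.2 hr)
  have hg : hs.toFinset.gcd id ≠ 0 := ne_zero_of_dvd_ne_zero hr (hdvd r hrs)
  refine ⟨_, hg, hdvd, fun z hz => ?_⟩
  by_contra! h
  have hgz : hs.toFinset.gcd id * z ∣ hs.toFinset.gcd id * 1 := by
    rw [mul_one]
    refine Finset.dvd_gcd fun r hr => ?_
    obtain ⟨b, hb⟩ := hdvd r (hs.mem_toFinset.1 hr)
    rw [id, hb]
    exact mul_dvd_mul_left _ (h b (hb ▸ hs.mem_toFinset.1 hr))
  exact hz.not_isUnit (isUnit_of_dvd_one ((mul_dvd_mul_iff_left hg).1 hgz))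

variable {T : Type u} [CommRing T] {Q₀ : Ideal T} {d : ℕ} {p : Stage T}

namespace Stage

lemma IsGood.exists_prime_mem [Nontrivial T] (hp : p.IsGood Q₀ d) {P : Ideal T} (hP : P ∈ p.primes)
    {r : p.ring} (hr : r ≠ 0) (hrP : (r : T) ∈ P) : ∃ z : p.ring, Prime z ∧ (z : T) ∈ P := by
  have := hp.ufm
  have := hp.isPrime P hP
  exact hp.isFractionClosed.exists_prime_mem fun h => hr (Subtype.ext (h r r.2 hrP))

lemma IsGood.notMem_of_isRelPrime [Nontrivial T] (hp : p.IsGood Q₀ d) {a b : p.ring}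
    (hab : IsRelPrime a b) (ha : a ≠ 0) {P : Ideal T} (hP : P ∈ p.primes) (haP : (a : T) ∈ P) :
    (b : T) ∉ P := fun hbP => by
  obtain ⟨z, hz, hzP⟩ := hp.exists_prime_mem hP ha haP
  exact hz.not_isUnit (hab (hp.dvd_of_mem P hP z a hz hzP haP) (hp.dvd_of_mem P hP z b hz hzP hbP))

lemma IsGood.exists_factor_forall_exists_notMem [Nontrivial T] (hp : p.IsGood Q₀ d) {s : Set T}
    (hs : s.Finite) (hsp : s ⊆ p.ring) (hs0 : ¬ s ⊆ {0}) :
    ∃ g : p.ring, g ≠ 0 ∧ (∀ r ∈ s, (g : T) ∣ r) ∧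
      ∀ P ∈ p.primes, ∃ b ∈ p.ring, g * b ∈ s ∧ b ∉ P := by
  have := hp.isFractionClosed.isDomain
  have := hp.ufm
  obtain ⟨r, hrs, hr⟩ := Set.not_subset.1 hs0
  obtain ⟨g, hg, hdvd, hprime⟩ := exists_forall_dvd_forall_prime_exists_not_dvd
    (hs.preimage (Subtype.val_injective (p := (· ∈ p.ring))).injOn)
    ⟨⟨r, hsp hrs⟩, hrs, fun h => hr (congrArg Subtype.val h)⟩
  refine ⟨g, hg, fun r hr => map_dvd p.ring.subtype (hdvd ⟨r, hsp hr⟩ hr), fun P hP => ?_⟩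
  obtain ⟨b, hb⟩ := hdvd ⟨r, hsp hrs⟩ hrs
  have hr' : r = g * b := congrArg Subtype.val hb
  by_cases hbP : (b : T) ∈ P
  · have hb0 : b ≠ 0 := by
      rintro rfl
      exact hr (by simpa using hr')
    obtain ⟨z, hz, hzP⟩ := hp.exists_prime_mem hP hb0 hbP
    obtain ⟨b', hb's, hzb'⟩ := hprime z hz
    exact ⟨b', b'.2, hb's, fun h => hzb' (hp.dvd_of_mem P hP z b' hz hzP h)⟩
  · exact ⟨b, b.2, hr' ▸ hrs, hbP⟩

variable [IsLocalRing T]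

lemma IsGood.exists_isTranscendentalMod (hp : p.IsGood Q₀ d) (hsize : p.size < #(ResidueField T))
    (a : Ideal T → T) {b : Ideal T → T} (hb : ∀ P ∈ p.primes, b P ∉ P) :
    ∃ u : T, ∀ P ∈ p.primes, IsTranscendentalMod p.ring P (a P + u * b P) :=
  exists_forall_isTranscendentalMod (p.aleph0_le_size.trans_lt hsize)
    (p.mk_ring_le_size.trans_lt hsize) (p.mk_primes_le_size.trans_lt hsize) hp.isPrime a hb

variable [IsNoetherianRing T]

lemma IsGood.exists_isGoodExtension_sub_mem (hp : p.IsGood Q₀ d) (hd : IsAdmissibleHeight T d)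
    (hsize : p.size < #(ResidueField T)) (u : T) {J : Ideal T} (hJ : ∀ P ∈ p.primes, ¬ J ≤ P) :
    ∃ q, IsGoodExtension Q₀ d p q ∧ ∃ x ∈ q.ring, x - u ∈ J := by
  obtain ⟨w, hwJ, hw⟩ :=
    exists_mem_forall_notMem (p.mk_primes_le_size.trans_lt hsize) hJ
  obtain ⟨s, hs⟩ := hp.exists_isTranscendentalMod hsize (fun _ => u) hw
  have := hp.isFractionClosed.isDomain
  have hone : ∀ P ∈ p.primes, (1 : T) ∉ P := fun P hP h =>
    (hp.isPrime P hP).ne_top ((Ideal.eq_top_iff_one P).2 h)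
  have hx : p.IsGenericRelation (u + s * w) 0 0 1 0 :=
    { eq := by simp
      ne_zero := one_ne_zero
      notMem := fun P hP _ => hone P hP
      left := fun P hP _ => hs P hP
      right := fun P hP h => absurd h (hone P hP) }
  obtain ⟨q, hq, hxq, -⟩ := hx.exists_isGoodExtension hp hd hsize
  refine ⟨q, hq, _, hxq, ?_⟩
  rw [add_sub_cancel_left]
  exact J.mul_mem_left _ hwJ

lemma IsGood.exists_isGoodExtension_of_isRelPrime (hp : p.IsGood Q₀ d)
    (hd : IsAdmissibleHeight T d) (hsize : p.size < #(ResidueField T)) {g y : p.ring}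
    (hgy : IsRelPrime g y) (hg : g ≠ 0) {e t : T} (h : g * e + y * t ∈ p.ring) :
    ∃ q, IsGoodExtension Q₀ d p q ∧ ∃ u : T, e - u * y ∈ q.ring ∧ t + u * g ∈ q.ring := by
  classical
  obtain ⟨u, hu⟩ := hp.exists_isTranscendentalMod hsize (fun P => if (g : T) ∈ P then e else t)
    (b := fun P => if (g : T) ∈ P then - (y : T) else g) fun P hP => by
      split_ifs with hgP
      · rw [neg_mem_iff]
        exact hp.notMem_of_isRelPrime hgy hg hP hgP
      · exact hgP
  have hx : p.IsGenericRelation (t + u * g) (e - u * y) y g ⟨_, h⟩ :=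
    { eq := by ring
      ne_zero := hg
      notMem := fun P hP hyP hgP => hp.notMem_of_isRelPrime hgy hg hP hgP hyP
      left := fun P hP hgP => by simpa only [if_neg hgP] using hu P hP
      right := fun P hP hgP => by
        simpa only [if_pos hgP, mul_neg, ← sub_eq_add_neg] using hu P hP }
  obtain ⟨q, hq, htq, heq⟩ := hx.exists_isGoodExtension hp hd hsize
  exact ⟨q, hq, u, heq, htq⟩

lemma IsGood.exists_isGoodExtension_mul_add_mul (hp : p.IsGood Q₀ d)
    (hd : IsAdmissibleHeight T d) (hsize : p.size < #(ResidueField T)) {g y : p.ring}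
    (hg : g ≠ 0) {J : Ideal T} (hJ : ∀ P ∈ p.primes, ∃ b ∈ p.ring, b ∈ J ∧ b ∉ P)
    {e t : T} (he : e ∈ J) (h : g * e + y * t ∈ p.ring) :
    ∃ q, IsGoodExtension Q₀ d p q ∧
      ∃ e' ∈ q.ring, e' ∈ J ∧ ∃ t' ∈ q.ring, g * e' + y * t' = g * e + y * t := by
  have := hp.isFractionClosed.isDomain
  have := hp.ufm
  obtain ⟨g, y, k, hgy, rfl, rfl⟩ := UniqueFactorizationMonoid.exists_reduced_factors g hg y
  have hk := left_ne_zero_of_mul hg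
  have hmem : g * e + y * t ∈ p.ring := by
    refine hp.isFractionClosed.mem_of_mul_mem k k.2 (Subtype.coe_ne_coe.2 hk) _ ?_
    convert h using 1
    push_cast
    ring
  obtain ⟨q₁, hq₁, u, heu, htu⟩ :=
    hp.exists_isGoodExtension_of_isRelPrime hd hsize hgy (right_ne_zero_of_mul hg) hmem
  have hJ₁ : ∀ P ∈ q₁.primes, ¬ J ≤ P := fun P hP hle => by
    by_cases hPp : P ∈ p.primes
    · obtain ⟨b, -, hbJ, hbP⟩ := hJ P hPp
      exact hbP (hle hbJ)
    · obtain ⟨b, hb, hbJ, hbQ₀⟩ := hJ Q₀ hp.mem_primes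
      exact hbQ₀ (hq₁.le.meetsTrivially P hP hPp b hb (hle hbJ) ▸ zero_mem Q₀)
  obtain ⟨q, hq, x, hxq, hxJ⟩ :=
    hq₁.isGood.exists_isGoodExtension_sub_mem hd (hq₁.size_le.trans_lt hsize) (-u) hJ₁
  have hle := hq₁.le.trans hq.le
  -- The relation is unchanged by `(e, t) ↦ (e - v y, t + v g)`; take `v = x + u`, which is in `J`.
  refine ⟨q, hq₁.trans hq, e - u * y - x * y,
    sub_mem (hq.le.ring_le heu) (mul_mem hxq (hle.ring_le y.2)), ?_, t + u * g + x * g,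
    add_mem (hq.le.ring_le htu) (mul_mem hxq (hle.ring_le g.2)), by push_cast; ring⟩
  convert sub_mem he (J.mul_mem_right (y : T) hxJ) using 1
  ring

lemma IsGood.exists_isGoodExtension_mem_span {p : Stage T} (hp : p.IsGood Q₀ d)
    (hd : IsAdmissibleHeight T d) (hsize : p.size < #(ResidueField T)) {s : Set T} (hs : s.Finite)
    (hsp : s ⊆ p.ring) {c : T} (hcp : c ∈ p.ring) (hc : c ∈ Ideal.span s) :
    ∃ q, IsGoodExtension Q₀ d p q ∧ c ∈ Submodule.span q.ring s := by
  induction s, hs using Set.Finite.induction_on generalizing p c with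
  | empty =>
    rw [Ideal.span_empty, Ideal.mem_bot] at hc
    exact ⟨p, .refl hp, hc ▸ zero_mem _⟩
  | @insert y s _ hs ih =>
    obtain ⟨hyp, hsp⟩ := Set.insert_subset_iff.1 hsp
    obtain ⟨t, z, hz, rfl⟩ := Ideal.mem_span_insert.1 hc
    by_cases hs0 : s ⊆ {0}
    · obtain rfl : z = 0 := by simpa using Ideal.span_mono hs0 hz
      rw [add_zero, mul_comm] at hcp ⊢
      refine ⟨p, .refl hp, ?_⟩
      obtain rfl | hy := eq_or_ne y 0
      · exact (zero_mul t).symm ▸ zero_mem _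
      · have ht := hp.isFractionClosed.mem_of_mul_mem y hyp hy t hcp
        exact mul_comm y t ▸ Submodule.smul_mem _ (⟨t, ht⟩ : p.ring)
          (Submodule.subset_span (Set.mem_insert y s))
    obtain ⟨g, hg, hgs, hgprimes⟩ := hp.exists_factor_forall_exists_notMem hs hsp hs0
    -- `J = (span s : g)` has content one over the ring of `p`, since `g` is the gcd of `s`.
    let J : Ideal T := (Ideal.span s).colon {(g : T)}
    have hmemJ : ∀ b, b ∈ J ↔ g * b ∈ Ideal.span s := fun b => by
      rw [Submodule.mem_colon_singleton, smul_eq_mul, mul_comm]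
    obtain ⟨e, rfl⟩ : (g : T) ∣ z := by
      rw [← Ideal.mem_span_singleton]
      exact Ideal.span_le.2 (fun r hr => Ideal.mem_span_singleton.2 (hgs r hr)) hz
    rw [add_comm, mul_comm t] at hcp ⊢
    obtain ⟨q, hq, e', he'q, he'J, t', ht'q, heq⟩ :=
      hp.exists_isGoodExtension_mul_add_mul (y := ⟨y, hyp⟩) hd hsize hg
        (fun P hP => (hgprimes P hP).imp fun b ⟨hb, hbs, hbP⟩ =>
          ⟨hb, (hmemJ b).2 (Ideal.subset_span hbs), hbP⟩) ((hmemJ e).2 hz) hcp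
    obtain ⟨q', hq', he'⟩ := ih hq.isGood (hq.size_le.trans_lt hsize)
      (hsp.trans hq.le.ring_le) (mul_mem (hq.le.ring_le g.2) he'q) ((hmemJ e').1 he'J)
    refine ⟨q', hq.trans hq', ?_⟩
    rw [← heq, mul_comm y]
    exact add_mem (Submodule.span_mono (Set.subset_insert y s) he')
      (Submodule.smul_mem _ (⟨t', hq'.le.ring_le ht'q⟩ : q'.ring)
        (Submodule.subset_span (Set.mem_insert y s)))

end Stage

end Steps

section Unions

variable {T : Type u} [CommRing T] {Q₀ : Ideal T} {d : ℕ} {F : Set (Stage T)} {p : Stage T}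

namespace Stage

/-- The union of a directed family of stages. -/
def union (F : Set (Stage T)) : Stage T :=
  ⟨sSup (ring '' F), ⋃ q ∈ F, q.primes⟩

lemma mem_primes_union {P : Ideal T} : P ∈ (union F).primes ↔ ∃ q ∈ F, P ∈ q.primes := by
  simp [union]

lemma mem_ring_union (hne : F.Nonempty) (hF : DirectedOn (· ≤ ·) F) {x : T} :
    x ∈ (union F).ring ↔ ∃ q ∈ F, x ∈ q.ring := by
  rw [union, Subring.mem_sSup_of_directedOn (hne.image _), Set.exists_mem_image]
  exact directedOn_image.2 (hF.mono fun {p q} (h : p ≤ q) => h.ring_le)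

lemma exists_le_mem_ring (hF : DirectedOn (· ≤ ·) F) (hp : p ∈ F) {x : T}
    (hx : x ∈ (union F).ring) : ∃ q ∈ F, p ≤ q ∧ x ∈ q.ring := by
  obtain ⟨q, hq, hxq⟩ := (mem_ring_union ⟨p, hp⟩ hF).1 hx
  obtain ⟨r, hr, hpr, hqr⟩ := hF p hp q hq
  exact ⟨r, hr, hpr, hqr.ring_le hxq⟩

lemma ring_le_ring_union (hp : p ∈ F) : p.ring ≤ (union F).ring :=
  le_sSup (Set.mem_image_of_mem _ hp)

lemma exists_subset_ring (hne : F.Nonempty) (hF : DirectedOn (· ≤ ·) F) {s : Finset T}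
    (hs : (s : Set T) ⊆ (union F).ring) : ∃ q ∈ F, (s : Set T) ⊆ q.ring :=
  DirectedOn.exists_mem_subset_of_finset_subset_biUnion hne
    (hF.mono fun {p q} (h : p ≤ q) => h.ring_le)
    fun x hx => by simpa using (mem_ring_union hne hF).1 (hs hx)

lemma le_union (hF : DirectedOn (· ≤ ·) F) (hp : p ∈ F) : p ≤ union F where
  ring_le := ring_le_ring_union hp
  primes_subset _ hP := mem_primes_union.2 ⟨p, hp, hP⟩
  meetsTrivially P hP hPp := by
    obtain ⟨q, hq, hPq⟩ := mem_primes_union.1 hP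
    obtain ⟨r, -, hpr, hqr⟩ := hF p hp q hq
    exact hpr.meetsTrivially P (hqr.primes_subset hPq) hPp
  prime_inclusion z hz := by
    refine ⟨fun h => hz.ne_zero (Subtype.ext (congrArg Subtype.val h :)), fun h => ?_, ?_⟩
    · obtain ⟨s, hs⟩ := h.exists_right_inv
      obtain ⟨q, -, hpq, hsq⟩ := exists_le_mem_ring hF hp s.2
      exact (hpq.prime_inclusion z hz).not_isUnit
        (.of_mul_eq_one ⟨s, hsq⟩ (Subtype.ext (congrArg Subtype.val hs :)))
    · rintro s t ⟨e, he⟩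
      obtain ⟨q, hq, hpq, hsq⟩ := exists_le_mem_ring hF hp s.2
      obtain ⟨q', hq', hqq', htq'⟩ := exists_le_mem_ring hF hq t.2
      obtain ⟨r, hr, hq'r, her⟩ := exists_le_mem_ring hF hq' e.2
      have hpr := (hpq.trans hqq').trans hq'r
      have hdvd : Subring.inclusion hpr.ring_le z ∣
          ⟨s, hq'r.ring_le (hqq'.ring_le hsq)⟩ * ⟨t, hq'r.ring_le htq'⟩ :=
        ⟨⟨e, her⟩, Subtype.ext (congrArg Subtype.val he :)⟩
      exact ((hpr.prime_inclusion z hz).dvd_or_dvd hdvd).imp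
        (map_dvd (Subring.inclusion (ring_le_ring_union hr)))
        (map_dvd (Subring.inclusion (ring_le_ring_union hr)))

lemma size_union_le (hne : F.Nonempty) (hF : DirectedOn (· ≤ ·) F) {μ : Cardinal.{u}}
    (hμ : ℵ₀ ≤ μ) (hFμ : #F ≤ μ) (hsize : ∀ p ∈ F, p.size ≤ μ) : (union F).size ≤ μ := by
  refine size_le hμ ?_ (mk_biUnion_le_of_aleph0_le hμ hFμ fun p hp =>
    p.mk_primes_le_size.trans (hsize p hp))
  have hring : ((union F).ring : Set T) = ⋃ p ∈ F, (p.ring : Set T) := by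
    ext x
    simp [mem_ring_union hne hF]
  rw [← SetLike.coe_sort_coe, hring]
  exact mk_biUnion_le_of_aleph0_le hμ hFμ fun p hp => p.mk_ring_le_size.trans (hsize p hp)

lemma isFractionClosed_union (hne : F.Nonempty) (hF : DirectedOn (· ≤ ·) F)
    (hclosed : ∀ p ∈ F, IsFractionClosed p.ring) : IsFractionClosed (union F).ring where
  mem_nonZeroDivisors r hr hr0 := by
    obtain ⟨p, hp, hrp⟩ := (mem_ring_union hne hF).1 hr
    exact (hclosed p hp).mem_nonZeroDivisors r hrp hr0
  mem_of_mul_mem r hr hr0 s hrs := by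
    obtain ⟨p, hp, hrp⟩ := (mem_ring_union hne hF).1 hr
    obtain ⟨q, hq, hpq, hrsq⟩ := exists_le_mem_ring hF hp hrs
    exact ring_le_ring_union hq
      ((hclosed q hq).mem_of_mul_mem r (hpq.ring_le hrp) hr0 s hrsq)

variable [Nontrivial T]

lemma uniqueFactorizationMonoid_union (hne : F.Nonempty) (hF : DirectedOn (· ≤ ·) F)
    (hgood : ∀ p ∈ F, p.IsGood Q₀ d) : UniqueFactorizationMonoid (union F).ring := by
  have := (isFractionClosed_union hne hF fun p hp => (hgood p hp).isFractionClosed).isDomain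
  refine .of_exists_prime_factors fun a ha => ?_
  obtain ⟨p, hp, hap⟩ := (mem_ring_union hne hF).1 a.2
  have := (hgood p hp).ufm
  have hle := le_union hF hp
  obtain ⟨f, hf, hfa⟩ := UniqueFactorizationMonoid.exists_prime_factors (⟨a, hap⟩ : p.ring)
    fun h => ha (Subtype.ext (congrArg Subtype.val h :))
  refine ⟨f.map (Subring.inclusion hle.ring_le), fun b hb => ?_, ?_⟩
  · obtain ⟨z, hz, rfl⟩ := Multiset.mem_map.1 hb
    exact hle.prime_inclusion z (hf z hz)
  · rw [← map_multiset_prod]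
    exact hfa.map (Subring.inclusion hle.ring_le)

lemma prime_of_prime_union (hF : DirectedOn (· ≤ ·) F) (hgood : ∀ p ∈ F, p.IsGood Q₀ d)
    (hp : p ∈ F) {z : (union F).ring} (hz : Prime z) (hzp : (z : T) ∈ p.ring) :
    Prime (⟨z, hzp⟩ : p.ring) := by
  have hR := (hgood p hp).isFractionClosed
  have := hR.isDomain
  have := (hgood p hp).ufm
  have hle := le_union hF hp
  have := (isFractionClosed_union ⟨p, hp⟩ hF fun q hq => (hgood q hq).isFractionClosed).isDomain
  obtain ⟨i, hi, hiz⟩ := WfDvdMonoid.exists_irreducible_factor (a := (⟨z, hzp⟩ : p.ring))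
    (fun h => hz.not_isUnit (h.map (Subring.inclusion hle.ring_le)))
    (fun h => hz.ne_zero (Subtype.ext (congrArg Subtype.val h :)))
  have hzi := ((hle.prime_inclusion i hi.prime).dvd_prime_iff_associated hz).1
    (map_dvd (Subring.inclusion hle.ring_le) hiz) |>.symm.dvd
  exact (associated_of_dvd_dvd hiz
    (hR.coe_dvd_coe.1 (map_dvd (union F).ring.subtype hzi))).prime hi.prime

lemma isGood_union (hne : F.Nonempty) (hF : DirectedOn (· ≤ ·) F)
    (hgood : ∀ p ∈ F, p.IsGood Q₀ d) : (union F).IsGood Q₀ d where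
  isFractionClosed := isFractionClosed_union hne hF fun p hp => (hgood p hp).isFractionClosed
  ufm := uniqueFactorizationMonoid_union hne hF hgood
  isPrime P hP := by
    obtain ⟨p, hp, hPp⟩ := mem_primes_union.1 hP
    exact (hgood p hp).isPrime P hPp
  associatedPrimes_subset P hP :=
    hne.elim fun p hp => mem_primes_union.2 ⟨p, hp, (hgood p hp).associatedPrimes_subset hP⟩
  mem_primes := hne.elim fun p hp => mem_primes_union.2 ⟨p, hp, (hgood p hp).mem_primes⟩
  meetsTrivially r hr hrQ := by
    obtain ⟨p, hp, hrp⟩ := (mem_ring_union hne hF).1 hr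
    exact (hgood p hp).meetsTrivially r hrp hrQ
  bound P hP := by
    obtain ⟨p, hp, hPp⟩ := mem_primes_union.1 hP
    exact ((hgood p hp).bound P hPp).imp_right (Or.imp_right (And.imp_right
      (mt fun h r hr => h r (ring_le_ring_union hp hr))))
  associatedPrimesMod_subset z hz P hP := by
    obtain ⟨p, hp, hzp⟩ := (mem_ring_union hne hF).1 z.2
    exact mem_primes_union.2 ⟨p, hp, (hgood p hp).associatedPrimesMod_subset _
      (prime_of_prime_union hF hgood hp hz hzp) hP⟩
  exists_height_eq z hz := by
    obtain ⟨p, hp, hzp⟩ := (mem_ring_union hne hF).1 z.2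
    obtain ⟨Q, hQ, hzQ⟩ := (hgood p hp).exists_height_eq _
      (prime_of_prime_union hF hgood hp hz hzp)
    exact ⟨Q, mem_primes_union.2 ⟨p, hp, hQ⟩, hzQ⟩
  dvd_of_mem P hP z r hz hzP hrP := by
    obtain ⟨p, hp, hPp⟩ := mem_primes_union.1 hP
    obtain ⟨q, hq, hpq, hzq⟩ := exists_le_mem_ring hF hp z.2
    obtain ⟨q', hq', hqq', hrq'⟩ := exists_le_mem_ring hF hq r.2
    have hz' := prime_of_prime_union hF hgood hq' hz (hqq'.ring_le hzq)
    exact map_dvd (Subring.inclusion (ring_le_ring_union hq'))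
      ((hgood q' hq').dvd_of_mem P (hqq'.primes_subset (hpq.primes_subset hPp)) _
        ⟨r, hrq'⟩ hz' hzP hrP)

end Stage

end Unions

section Tower

lemma exists_forall_eq_image_Iio {ι : Type*} {α : Type*} [Preorder ι] [WellFoundedLT ι]
    (F : ι → Set α → α) : ∃ G : ι → α, ∀ a, G a = F a (G '' Set.Iio a) := by
  let G : ι → α := (wellFounded_lt (α := ι)).fix fun a G => F a {q | ∃ b, ∃ h : b < a, G b h = q}
  refine ⟨G, fun a => ?_⟩
  simp only [G]
  rw [WellFounded.fix_eq]
  congr 1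
  ext q
  simp

lemma exists_forall_exists_lt_apply_eq {ι X : Type u} [LinearOrder ι] [Infinite ι]
    (hι : ∀ a : ι, #(Set.Iio a) < #ι) (hX : #X ≤ #ι) [Nonempty X] :
    ∃ e : ι → X, ∀ x a, ∃ b, a < b ∧ e b = x := by
  have hcard : #ι = #(X × ι) := by
    rw [mk_prod, lift_id, lift_id, mul_eq_right (aleph0_le_mk ι) hX (mk_ne_zero X)]
  obtain ⟨φ⟩ := Cardinal.eq.1 hcard
  refine ⟨fun b => (φ b).1, fun x a => ?_⟩
  by_contra! h
  have hmem : ∀ i, φ.symm (x, i) ∈ insert a (Set.Iio a) := fun i => by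
    rw [Set.Iio_insert]
    exact not_lt.1 fun hlt => h _ hlt (by simp)
  refine (add_lt_of_lt (aleph0_le_mk ι) (hι a) (one_lt_aleph0.trans_le (aleph0_le_mk ι))).not_ge ?_
  refine le_trans ?_ (mk_insert_le (s := Set.Iio a) (a := a))
  exact mk_le_of_injective (f := fun i => (⟨φ.symm (x, i), hmem i⟩ : ↥(insert a (Set.Iio a))))
    fun i j hij => by simpa using congrArg Subtype.val hij

lemma mem_span_of_subring_le {R : Type*} [CommRing R] {A B : Subring R} (h : A ≤ B) {s : Set R}
    {x : R} (hx : x ∈ Submodule.span A s) : x ∈ Submodule.span B s := by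
  induction hx using Submodule.span_induction with
  | mem x hx => exact Submodule.subset_span hx
  | zero => exact zero_mem _
  | add x y _ _ hx hy => exact add_mem hx hy
  | smul a x _ hx => exact Submodule.smul_mem _ (⟨a, h a.2⟩ : B) hx

variable {T : Type u} [CommRing T] {Q₀ : Ideal T} {d : ℕ} {p : Stage T}

namespace Stage

/-- `q` is a good extension of `p` that carries out the task `k = (s, c)`: unless the ideal `(s)`
lies in a controlled prime of `p`, the ring of `q` meets the coset `c + (s)`; and if `s` and `c`
come from the ring of `p`, a relation `c ∈ (s)` over `T` is realized over the ring of `q`. -/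
structure IsStep (Q₀ : Ideal T) (d : ℕ) (k : Finset T × T) (p q : Stage T) : Prop
    extends IsGoodExtension Q₀ d p q where
  exists_sub_mem : (∀ P ∈ p.primes, ¬ Ideal.span (k.1 : Set T) ≤ P) →
    ∃ x ∈ q.ring, x - k.2 ∈ Ideal.span (k.1 : Set T)
  mem_span : (k.1 : Set T) ⊆ p.ring → k.2 ∈ p.ring → k.2 ∈ Ideal.span (k.1 : Set T) →
    k.2 ∈ Submodule.span q.ring (k.1 : Set T)

lemma directedOn_insert_image {ι : Type*} [LinearOrder ι] {G : ι → Stage T} {b : Stage T}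
    {s : Set ι} (hG : ∀ c ∈ s, ∀ p ∈ insert b (G '' Set.Iio c), p ≤ G c) :
    DirectedOn (· ≤ ·) (insert b (G '' s)) := by
  refine (IsChain.insert ?_ ?_).directedOn
  · rintro _ ⟨i, hi, rfl⟩ _ ⟨j, hj, rfl⟩ -
    obtain hij | rfl | hji := lt_trichotomy i j
    · exact Or.inl (hG j hj _ (Or.inr ⟨i, hij, rfl⟩))
    · exact Or.inl le_rfl
    · exact Or.inr (hG i hi _ (Or.inr ⟨j, hji, rfl⟩))
  · rintro _ ⟨i, hi, rfl⟩ -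
    exact Or.inl (hG i hi _ (Or.inl rfl))

lemma directedOn_insert_image_of_union_le {ι : Type*} [LinearOrder ι] [WellFoundedLT ι]
    {G : ι → Stage T} {b : Stage T} {s : Set ι} (hs : IsLowerSet s)
    (hG : ∀ c ∈ s, union (insert b (G '' Set.Iio c)) ≤ G c) :
    DirectedOn (· ≤ ·) (insert b (G '' s)) := by
  refine directedOn_insert_image fun c => ?_
  induction c using WellFoundedLT.induction with
  | ind c ih =>
    intro hc p hp
    exact (le_union (directedOn_insert_image fun i hi => ih i hi (hs (Set.mem_Iio.1 hi).le hc))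
      hp).trans (hG c hc)

variable [IsLocalRing T] [IsNoetherianRing T]

lemma IsGood.exists_isStep (hp : p.IsGood Q₀ d) (hd : IsAdmissibleHeight T d)
    (hsize : p.size < #(ResidueField T)) (k : Finset T × T) : ∃ q, IsStep Q₀ d k p q := by
  obtain ⟨s, c⟩ := k
  obtain ⟨q, hq, hdense⟩ : ∃ q, IsGoodExtension Q₀ d p q ∧
      ((∀ P ∈ p.primes, ¬ Ideal.span (s : Set T) ≤ P) →
        ∃ x ∈ q.ring, x - c ∈ Ideal.span (s : Set T)) := by
    by_cases hJ : ∀ P ∈ p.primes, ¬ Ideal.span (s : Set T) ≤ P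
    · exact (hp.exists_isGoodExtension_sub_mem hd hsize c hJ).imp fun q hq => hq.imp_right
        fun h _ => h
    · exact ⟨p, .refl hp, fun h => absurd h hJ⟩
  by_cases hc : (s : Set T) ⊆ q.ring ∧ c ∈ q.ring ∧ c ∈ Ideal.span (s : Set T)
  · obtain ⟨q', hq', hcq'⟩ := hq.isGood.exists_isGoodExtension_mem_span hd
      (hq.size_le.trans_lt hsize) s.finite_toSet hc.1 hc.2.1 hc.2.2
    exact ⟨q', hq.trans hq', fun h => (hdense h).imp fun x hx => hx.imp_left (hq'.le.ring_le ·),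
      fun _ _ _ => hcq'⟩
  · exact ⟨q, hq, hdense, fun hs hcp hcs =>
      absurd ⟨hs.trans hq.le.ring_le, hq.le.ring_le hcp, hcs⟩ hc⟩

lemma IsGood.exists_tower {b : Stage T} (hb : b.IsGood Q₀ d) (hd : IsAdmissibleHeight T d)
    (hsize : b.size < #(ResidueField T)) {ι : Type u} [LinearOrder ι] [WellFoundedLT ι]
    (hι : ∀ a : ι, #(Set.Iio a) < #(ResidueField T)) (e : ι → Finset T × T) :
    ∃ G : ι → Stage T, ∀ a, IsStep Q₀ d (e a) (union (insert b (G '' Set.Iio a))) (G a) := by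
  have : Nonempty (Stage T) := ⟨b⟩
  obtain ⟨G, hG⟩ := exists_forall_eq_image_Iio fun a S =>
    Classical.epsilon fun q => IsStep Q₀ d (e a) (union (insert b S)) q
  suffices h : ∀ a, IsStep Q₀ d (e a) (union (insert b (G '' Set.Iio a))) (G a) ∧
      (G a).size ≤ max b.size #(Set.Iio a) from ⟨G, fun a => (h a).1⟩
  intro a
  induction a using WellFoundedLT.induction with
  | ind a ih =>
    have hF := directedOn_insert_image_of_union_le (isLowerSet_Iio a) fun c hc => (ih c hc).1.le
    have hgood : (union (insert b (G '' Set.Iio a))).IsGood Q₀ d := by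
      refine isGood_union (Set.insert_nonempty _ _) hF ?_
      rintro _ (rfl | ⟨c, hc, rfl⟩)
      · exact hb
      · exact (ih c hc).1.isGood
    have hμ : ℵ₀ ≤ max b.size #(Set.Iio a) := b.aleph0_le_size.trans (le_max_left _ _)
    have hle : (union (insert b (G '' Set.Iio a))).size ≤ max b.size #(Set.Iio a) := by
      refine size_union_le (Set.insert_nonempty _ _) hF hμ (mk_insert_le.trans
        (add_le_of_le hμ (mk_image_le.trans (le_max_right _ _)) (one_le_aleph0.trans hμ))) ?_
      rintro _ (rfl | ⟨c, hc, rfl⟩)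
      · exact le_max_left _ _
      · exact (ih c hc).2.trans (max_le_max le_rfl
          (mk_le_mk_of_subset (Set.Iio_subset_Iio (Set.mem_Iio.1 hc).le)))
    have hstep : IsStep Q₀ d (e a) (union (insert b (G '' Set.Iio a))) (G a) :=
      (hG a).symm ▸ Classical.epsilon_spec
        (hgood.exists_isStep hd (hle.trans_lt (max_lt hsize (hι a))) (e a))
    exact ⟨hstep, hstep.size_le.trans hle⟩

/-- A good stage that can no longer be improved: its ring `A` is dense for every ideal that lies
in no controlled prime, and finitely generated ideals of `A` are contracted from `T`. -/
structure IsSaturated (Q₀ : Ideal T) (d : ℕ) (p : Stage T) : Prop extends IsGood Q₀ d p where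
  exists_sub_mem : ∀ J : Ideal T, (∀ P ∈ p.primes, ¬ J ≤ P) → ∀ u, ∃ x ∈ p.ring, x - u ∈ J
  mem_span : ∀ s : Finset T, (s : Set T) ⊆ p.ring → ∀ c ∈ p.ring,
    c ∈ Ideal.span (s : Set T) → c ∈ Submodule.span p.ring (s : Set T)

lemma isSaturated_union_of_isStep {ι : Type u} [LinearOrder ι] [WellFoundedLT ι] [Nonempty ι]
    {b : Stage T} (hb : b.IsGood Q₀ d) {G : ι → Stage T} {e : ι → Finset T × T}
    (he : ∀ k a, ∃ c, a < c ∧ e c = k)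
    (hG : ∀ a, IsStep Q₀ d (e a) (union (insert b (G '' Set.Iio a))) (G a)) :
    (union (insert b (Set.range G))).IsSaturated Q₀ d := by
  have hdir := fun s hs => directedOn_insert_image_of_union_le (s := s) hs fun c _ => (hG c).le
  have hF := Set.image_univ (f := G) ▸ hdir Set.univ isLowerSet_univ
  have hle : ∀ a, G a ≤ union (insert b (Set.range G)) := fun a => le_union hF (Or.inr ⟨a, rfl⟩)
  have hlt : ∀ a c, a < c → G a ≤ union (insert b (G '' Set.Iio c)) := fun a c hac =>
    le_union (hdir _ (isLowerSet_Iio c)) (Or.inr ⟨a, hac, rfl⟩)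
  refine ⟨isGood_union (Set.insert_nonempty _ _) hF ?_, fun J hJ u => ?_, fun s hs c hc hcs => ?_⟩
  · rintro _ (rfl | ⟨a, rfl⟩)
    · exact hb
    · exact (hG a).isGood
  · obtain ⟨s, rfl⟩ := J.fg_of_isNoetherianRing
    obtain ⟨a, -, ha⟩ := he (s, u) (Classical.arbitrary ι)
    have h := (hG a).exists_sub_mem
    rw [ha] at h
    obtain ⟨x, hx, hxu⟩ := h fun P hP => hJ P (((hG a).le.trans (hle a)).primes_subset hP)
    exact ⟨x, (hle a).ring_le hx, hxu⟩
  · classical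
    obtain ⟨p, hp, hsp⟩ := exists_subset_ring (s := insert c s) (Set.insert_nonempty _ _) hF
      (by simpa [Set.insert_subset_iff] using ⟨hc, hs⟩)
    obtain ⟨a, ha, hpa⟩ : ∃ a, e a = (s, c) ∧ p ≤ union (insert b (G '' Set.Iio a)) := by
      obtain rfl | ⟨i, rfl⟩ := hp
      · obtain ⟨a, -, ha⟩ := he (s, c) (Classical.arbitrary ι)
        exact ⟨a, ha, le_union (hdir _ (isLowerSet_Iio a)) (Or.inl rfl)⟩
      · obtain ⟨a, hia, ha⟩ := he (s, c) i
        exact ⟨a, ha, hlt i a hia⟩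
    rw [Finset.coe_insert, Set.insert_subset_iff] at hsp
    have h := (hG a).mem_span
    rw [ha] at h
    exact mem_span_of_subring_le (hle a).ring_le
      (h (hsp.2.trans hpa.ring_le) (hpa.ring_le hsp.1) hcs)

theorem IsGood.exists_isSaturated {b : Stage T} (hb : b.IsGood Q₀ d)
    (hd : IsAdmissibleHeight T d) (hsize : b.size < #(ResidueField T))
    (hcard : #T ≤ #(ResidueField T)) : ∃ p : Stage T, p.IsSaturated Q₀ d := by
  have hκ : ℵ₀ < #(ResidueField T) := b.aleph0_le_size.trans_lt hsize
  let ι := (#(ResidueField T)).ord.ToType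
  have hι : #ι = #(ResidueField T) := mk_ord_toType _
  have hlt : ∀ a : ι, #(Set.Iio a) < #ι := fun a => mk_Iio_lt a (by simp [ι])
  have : Infinite ι := infinite_iff.2 (hι ▸ hκ.le)
  have htasks : #(Finset T × T) ≤ #ι := by
    have : Infinite T := infinite_iff.2 (hκ.le.trans (mk_le_of_surjective residue_surjective))
    rw [mk_prod, lift_id, lift_id, mk_finset_of_infinite, mul_eq_self (aleph0_le_mk T), hι]
    exact hcard
  obtain ⟨e, he⟩ := exists_forall_exists_lt_apply_eq hlt htasks
  obtain ⟨G, hG⟩ := hb.exists_tower hd hsize (fun a => (hlt a).trans_eq hι) e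
  exact ⟨_, isSaturated_union_of_isStep hb he hG⟩

end Stage

end Tower

section RationalSubring

variable {T : Type u} [CommRing T]

/-- The rational numbers that lie in `T`, from which the construction starts. -/
abbrev rationalSubring (T : Type u) [CommRing T] : Subring T :=
  fractionSubring ⊥

lemma mk_rationalSubring_le : #(rationalSubring T) ≤ ℵ₀ := by
  have hbot : #(⊥ : Subring T) ≤ ℵ₀ := by
    rw [← SetLike.coe_sort_coe, Subring.coe_bot]
    exact (Set.countable_range _).le_aleph0
  exact (mk_fractionSubring_le ⊥).trans ((mul_le_mul' hbot hbot).trans aleph0_mul_aleph0.le)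

lemma isFractionClosed_rationalSubring (hint : ∀ n : ℤ, n ≠ 0 → (n : T) ∈ nonZeroDivisors T) :
    IsFractionClosed (rationalSubring T) := by
  refine isFractionClosed_fractionSubring fun b hb hb0 => ?_
  obtain ⟨n, rfl⟩ := Subring.mem_bot.1 hb
  exact hint n fun h => hb0 (by rw [h, Int.cast_zero])

lemma isUnit_intCast_of_isCoprime {n m : ℤ} (h : IsCoprime n m) {s : T}
    (hs : (n : T) * s = m) : IsUnit (n : T) := by
  obtain ⟨u, v, huv⟩ := h
  have huv' : (u : T) * n + v * m = 1 := mod_cast congrArg (Int.cast (R := T)) huv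
  exact .of_mul_eq_one (u + v * s) (by linear_combination huv' + v * hs)

lemma exists_associated_intCast [Nontrivial T]
    (hint : ∀ n : ℤ, n ≠ 0 → (n : T) ∈ nonZeroDivisors T)
    (s : rationalSubring T) : ∃ n : ℤ, Associated (n : rationalSubring T) s := by
  obtain ⟨b, hb, hbreg, hbs⟩ := s.2
  obtain ⟨n, rfl⟩ := Subring.mem_bot.1 hb
  obtain ⟨m, hm⟩ := Subring.mem_bot.1 hbs
  have hn : n ≠ 0 := fun h => nonZeroDivisors.ne_zero hbreg (by rw [h, Int.cast_zero])
  have hg : gcd n m ≠ 0 := fun h => hn ((gcd_eq_zero_iff n m).1 h).1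
  obtain ⟨n', m', hn', hm', hcop⟩ := extract_gcd n m
  have hs : (n' : T) * s = m' := by
    refine (mul_cancel_left_mem_nonZeroDivisors (hint (gcd n m) hg)).1 ?_
    rw [← mul_assoc, ← Int.cast_mul, ← Int.cast_mul, ← hn', ← hm']
    exact hm.symm
  have hunit : IsUnit (n' : rationalSubring T) :=
    (isFractionClosed_rationalSubring hint).isUnit_coe.1 (by
      simpa using isUnit_intCast_of_isCoprime ((gcd_isUnit_iff n' m').1 hcop) hs)
  have hs' : (n' : rationalSubring T) * s = m' := Subtype.ext (mod_cast hs)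
  exact ⟨m', hs' ▸ associated_unit_mul_left s _ hunit⟩

lemma exists_prime_intCast_mem [Nontrivial T]
    (hint : ∀ n : ℤ, n ≠ 0 → (n : T) ∈ nonZeroDivisors T)
    {q : Ideal (rationalSubring T)} [q.IsPrime] (hq : q ≠ ⊥) :
    ∃ l : ℤ, Prime l ∧ (l : rationalSubring T) ∈ q := by
  obtain ⟨s, hs, hs0⟩ := Submodule.exists_mem_ne_zero_of_ne_bot hq
  obtain ⟨n, hn⟩ := exists_associated_intCast hint s
  have hnq : n ∈ q.comap (Int.castRingHom (rationalSubring T)) := q.mem_of_dvd hn.symm.dvd hs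
  have hprime : (q.comap (Int.castRingHom (rationalSubring T))).IsPrime := inferInstance
  obtain ⟨l, hl, hlprime⟩ :=
    hprime.exists_mem_prime_of_ne_bot fun h => by
        rw [h, Ideal.mem_bot] at hnq
        subst hnq
        exact hs0 (hn.symm.eq_zero_iff.2 Int.cast_zero)
  exact ⟨l, hlprime, hl⟩

lemma intCast_dvd_of_mem [Nontrivial T]
    (hint : ∀ n : ℤ, n ≠ 0 → (n : T) ∈ nonZeroDivisors T) {l : ℤ}
    (hl : Prime l) {P : Ideal T} [hP : P.IsPrime] (hlP : (l : T) ∈ P) {s : rationalSubring T}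
    (hs : (s : T) ∈ P) : (l : rationalSubring T) ∣ s := by
  obtain ⟨n, hn⟩ := exists_associated_intCast hint s
  refine dvd_trans ?_ hn.dvd
  by_contra hdvd
  obtain ⟨u, v, huv⟩ := hl.irreducible.coprime_iff_not_dvd.2
    (mt (map_dvd (Int.castRingHom (rationalSubring T))) hdvd)
  have hnP : (n : T) ∈ P := by
    simpa using P.mem_of_dvd (map_dvd (rationalSubring T).subtype hn.symm.dvd) hs
  refine hP.ne_top ((Ideal.eq_top_iff_one P).2 ?_)
  have huv' : (u : T) * l + v * n = 1 := mod_cast congrArg (Int.cast (R := T)) huv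
  exact huv' ▸ P.add_mem (P.mul_mem_left _ hlP) (P.mul_mem_left _ hnP)

lemma dvd_of_mem_rationalSubring [Nontrivial T]
    (hint : ∀ n : ℤ, n ≠ 0 → (n : T) ∈ nonZeroDivisors T) {P : Ideal T} [P.IsPrime]
    {z r : rationalSubring T} (hz : Prime z) (hzP : (z : T) ∈ P) (hrP : (r : T) ∈ P) : z ∣ r := by
  have := (Ideal.span_singleton_prime hz.ne_zero).2 hz
  obtain ⟨l, hl, hlz⟩ := exists_prime_intCast_mem hint (q := Ideal.span {z})
    (by simpa using hz.ne_zero)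
  rw [Ideal.mem_span_singleton] at hlz
  have hlP : (l : T) ∈ P := by
    simpa using P.mem_of_dvd (map_dvd (rationalSubring T).subtype hlz) hzP
  exact hlz.trans (intCast_dvd_of_mem hint hl hlP hrP)

lemma uniqueFactorizationMonoid_rationalSubring [IsLocalRing T]
    (hint : ∀ n : ℤ, n ≠ 0 → (n : T) ∈ nonZeroDivisors T) :
    UniqueFactorizationMonoid (rationalSubring T) := by
  have hR := isFractionClosed_rationalSubring hint
  have := hR.isDomain
  rw [UniqueFactorizationMonoid.iff_exists_prime_mem_of_isPrime]
  intro q hq0 hq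
  obtain ⟨l, hl, hlq⟩ := exists_prime_intCast_mem hint hq0
  have hlm : (l : T) ∈ maximalIdeal T := by
    have h := mt hR.isUnit_coe.1 fun h => hq.ne_top (Ideal.eq_top_of_isUnit_mem _ hlq h)
    simpa using h
  have hl0 : (l : rationalSubring T) ≠ 0 := fun h =>
    nonZeroDivisors.ne_zero (hint l hl.ne_zero) (by simpa using congrArg Subtype.val h)
  exact ⟨l, hlq, hR.prime_of_forall_dvd hl0 (P := maximalIdeal T) (by simpa using hlm)
    fun s hs => map_dvd (rationalSubring T).subtype (intCast_dvd_of_mem hint hl hlm hs)⟩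

end RationalSubring

section Base

variable {T : Type u} [CommRing T] [IsLocalRing T] [IsNoetherianRing T] {Q₀ : Ideal T} {d : ℕ}

lemma IsAdmissibleHeight.exists_isPrime_height_eq_mem (hd : IsAdmissibleHeight T d)
    (hκ : ℵ₀ < #(ResidueField T)) {z : T} (hz : z ∈ nonZeroDivisors T)
    (hzm : z ∈ maximalIdeal T) : ∃ Q : Ideal T, Q.IsPrime ∧ Q.height = d ∧ z ∈ Q := by
  obtain ⟨Q, hQ, hheight, hle, -⟩ :=
    (isPureAvoiding_span_singleton (N := ∅) hz (by simp)).exists_isPrime_height_eq hκ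
      (by simpa using aleph0_pos.trans hκ) ((Ideal.span_singleton_le_iff_mem _).2 hzm) hd.one_le
      hd.lt_height
  exact ⟨Q, hQ, hheight, (Ideal.span_singleton_le_iff_mem Q).1 hle⟩

lemma IsFractionClosed.exists_isGood {R : Subring T} (hR : IsFractionClosed R)
    [UniqueFactorizationMonoid R]
    (hdvd : ∀ P : Ideal T, P.IsPrime → ∀ z r : R, Prime z → (z : T) ∈ P → (r : T) ∈ P → z ∣ r)
    (hQ₀ : Q₀.IsPrime) (hRQ₀ : MeetsTrivially R Q₀) (hd : IsAdmissibleHeight T d)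
    (hκ : ℵ₀ < #(ResidueField T)) :
    ∃ p : Stage T, p.IsGood Q₀ d ∧ p.size ≤ max ℵ₀ #R := by
  have hm : ∀ z : R, Prime z → (z : T) ∈ maximalIdeal T := fun z hz =>
    (mem_maximalIdeal _).2 (mt hR.isUnit_coe.1 hz.not_isUnit)
  choose! Q hQprime hQheight hQmem using fun z (hz : Prime z) =>
    hd.exists_isPrime_height_eq_mem hκ (hR.coe_mem_nonZeroDivisors hz.ne_zero) (hm z hz)
  let C : Set (Ideal T) := insert Q₀ (associatedPrimes T T) ∪
    ⋃ z ∈ {z : R | Prime z}, insert (Q z) (associatedPrimesMod (z : T))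
  have hC : ∀ P ∈ C, P.IsPrime ∧ (P ∈ associatedPrimes T T ∨ P = Q₀ ∨
      P.height ≤ d ∧ ¬ MeetsTrivially R P) := by
    have hne : ∀ z : R, Prime z → ∀ P : Ideal T, (z : T) ∈ P → ¬ MeetsTrivially R P :=
      fun z hz P hzP h => hz.ne_zero (Subtype.ext (h z z.2 hzP))
    rintro P ((rfl | hP) | hP)
    · exact ⟨hQ₀, Or.inr (Or.inl rfl)⟩
    · exact ⟨hP.1, Or.inl hP⟩
    · obtain ⟨z, hz, rfl | hP⟩ := Set.mem_iUnion₂.1 hP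
      · exact ⟨hQprime z hz, Or.inr (Or.inr ⟨(hQheight z hz).le, hne z hz _ (hQmem z hz)⟩)⟩
      · exact ⟨hP.1, Or.inr (Or.inr ⟨hd.height_le z (hR.coe_mem_nonZeroDivisors hz.ne_zero) P hP,
          hne z hz P (mem_of_mem_associatedPrimesMod hP)⟩)⟩
  refine ⟨⟨R, C⟩, ⟨hR, ‹_›, fun P hP => (hC P hP).1, fun P hP => Or.inl (Or.inr hP),
    Or.inl (Or.inl rfl), hRQ₀, fun P hP => (hC P hP).2,
    fun z hz P hP => Or.inr (Set.mem_iUnion₂.2 ⟨z, hz, Or.inr hP⟩),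
    fun z hz => ⟨Q z, Or.inr (Set.mem_iUnion₂.2 ⟨z, hz, Or.inl rfl⟩), hQheight z hz, hQmem z hz⟩,
    fun P hP => hdvd P (hC P hP).1⟩, Stage.size_le (le_max_left _ _) (le_max_right _ _) ?_⟩
  have hAss : ∀ (S : Set (Ideal T)) (P : Ideal T), S.Finite →
      #(insert P S : Set (Ideal T)) ≤ max ℵ₀ #R :=
    fun S P hS => (hS.insert P).countable.le_aleph0.trans (le_max_left _ _)
  exact mk_union_le_of_aleph0_le (le_max_left _ _) (hAss _ _ (associatedPrimes.finite T T))
    (mk_biUnion_le_of_aleph0_le (le_max_left _ _) ((mk_subtype_le _).trans (le_max_right _ _))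
      fun z _ => hAss _ _ (associatedPrimes.finite T _))

lemma exists_isGood_height_eq (hd : IsAdmissibleHeight T d) (hκ : ℵ₀ < #(ResidueField T))
    (hint : ∀ n : ℤ, n ≠ 0 → (n : T) ∈ nonZeroDivisors T) {t : ℕ}
    (ht : t < (maximalIdeal T).height) :
    ∃ Q₀ : Ideal T, Q₀.height = t ∧ ∃ p : Stage T, p.IsGood Q₀ d ∧ p.size ≤ ℵ₀ := by
  have hR := isFractionClosed_rationalSubring hint
  have := uniqueFactorizationMonoid_rationalSubring hint
  have hcard : #{r : T | r ∈ rationalSubring T ∧ r ≠ 0} ≤ ℵ₀ :=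
    (mk_le_mk_of_subset fun r hr => hr.1).trans mk_rationalSubring_le
  obtain ⟨Q₀, hQ₀, hheight, -, hnot⟩ :=
    (isPureAvoiding_bot fun r hr => hR.mem_nonZeroDivisors r hr.1 hr.2).exists_isPrime_height_eq hκ
      (hcard.trans_lt hκ) bot_le t.zero_le ht
  obtain ⟨p, hp, hsize⟩ := hR.exists_isGood
    (fun P hP z r hz hzP hrP => dvd_of_mem_rationalSubring hint hz hzP hrP) hQ₀
    (fun r hr hrQ => by_contra fun hr0 => hnot r ⟨hr, hr0⟩ hrQ) hd hκ
  exact ⟨Q₀, hheight, p, hp, hsize.trans (max_le le_rfl mk_rationalSubring_le)⟩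

end Base

section Uncountable

lemma sModEq_pow_smul_top_iff {R : Type*} [CommRing R] {I : Ideal R} {n : ℕ} {a b : R} :
    a ≡ b [SMOD (I ^ n • ⊤ : Submodule R R)] ↔ a - b ∈ I ^ n := by
  simp [SModEq.sub_mem]

lemma aleph0_lt_mk_of_isPrecomplete {R : Type*} [CommRing R] {I : Ideal R} [IsPrecomplete I R]
    (hI : ∀ n, ¬ I ^ n ≤ I ^ (n + 1)) : ℵ₀ < #R := by
  by_contra! hR
  have : Countable R := mk_le_aleph0_iff.1 hR
  obtain ⟨f, hf⟩ := exists_surjective_nat R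
  have hnext : ∀ (n : ℕ) (x : R), ∃ y, x - y ∈ I ^ n ∧ f n - y ∉ I ^ (n + 1) := fun n x => by
    by_cases hx : f n - x ∈ I ^ (n + 1)
    · obtain ⟨a, ha, ha'⟩ := SetLike.not_le_iff_exists.1 (hI n)
      exact ⟨x - a, by simpa, fun h => ha' (by simpa using sub_mem h hx)⟩
    · exact ⟨x, by simp, hx⟩
  choose next hmem hnotMem using hnext
  let x : ℕ → R := fun n => Nat.rec 0 next n
  obtain ⟨y, hy⟩ := IsPrecomplete.prec' (I := I) x fun {m n} hmn => by
    induction n, hmn using Nat.le_induction with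
    | base => rfl
    | succ n hmn ih =>
      exact ih.trans (sModEq_pow_smul_top_iff.2 (Ideal.pow_le_pow_right hmn (hmem n (x n))))
  obtain ⟨n, rfl⟩ := hf y
  exact hnotMem n (x n) (sub_mem_comm_iff.1 (sModEq_pow_smul_top_iff.1 (hy (n + 1))))

lemma not_maximalIdeal_pow_le_pow_succ {T : Type*} [CommRing T] [IsLocalRing T] [IsNoetherianRing T]
    (hT : 0 < (maximalIdeal T).height) (n : ℕ) :
    ¬ maximalIdeal T ^ n ≤ maximalIdeal T ^ (n + 1) := fun hle => by
  have hbot : maximalIdeal T ^ n = ⊥ :=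
    Submodule.eq_bot_of_le_smul_of_le_jacobson_bot (maximalIdeal T) _ (IsNoetherian.noetherian _)
      (by rwa [smul_eq_mul, ← pow_succ']) (maximalIdeal_le_jacobson _)
  refine hT.ne' (Ideal.height_eq_zero_iff.2 ⟨⟨inferInstance, bot_le⟩, fun P hP _ => ?_⟩)
  have := hP.1
  exact Ideal.IsPrime.le_of_pow_le (hbot.trans_le bot_le)

end Uncountable

section Completion

variable {A T : Type*} [CommRing A] [CommRing T] [Algebra A T]

/-- The `J`-adic topology of the `A`-algebra `T` restricts to the `I`-adic topology of `A`, and the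
image of `A` is dense in `T`. -/
structure IsAdicallyDense (I : Ideal A) (J : Ideal T) : Prop where
  comap_pow : ∀ n, (J ^ n).comap (algebraMap A T) = I ^ n
  exists_sub_mem : ∀ (n : ℕ) (u : T), ∃ a : A, algebraMap A T a - u ∈ J ^ n

namespace IsAdicallyDense

variable {I : Ideal A} {J : Ideal T}

/-- The map to `T ⧸ J ^ n` through which the completion of `A` acts on the `n`-th quotient. -/
noncomputable def level (h : IsAdicallyDense I J) (n : ℕ) : AdicCompletion I A →ₐ[A] T ⧸ J ^ n :=
  (Ideal.quotientMapₐ (J ^ n) (Algebra.ofId A T) (h.comap_pow n).ge).comp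
    (AdicCompletion.evalₐ I n)

lemma level_mk (h : IsAdicallyDense I J) (n : ℕ) (x : AdicCompletion.AdicCauchySequence I A) :
    h.level n (AdicCompletion.mk I A x) = Ideal.Quotient.mk (J ^ n) (algebraMap A T (x n)) := by
  rw [level, AlgHom.comp_apply, AdicCompletion.evalₐ_mk]
  rfl

lemma level_eq_zero_iff (h : IsAdicallyDense I J) {n : ℕ} {x : AdicCompletion I A} :
    h.level n x = 0 ↔ AdicCompletion.evalₐ I n x = 0 :=
  map_eq_zero_iff (Ideal.quotientMap (J ^ n) (algebraMap A T) (h.comap_pow n).ge)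
    (Ideal.quotientMap_injective' (h.comap_pow n).le)

lemma factor_comp_level (h : IsAdicallyDense I J) {m n : ℕ} (hle : m ≤ n) :
    (Ideal.Quotient.factorₐ A (Ideal.pow_le_pow_right hle)).comp (h.level n) = h.level m := by
  ext x
  induction x using AdicCompletion.induction_on with | h x
  have hx : x n - x m ∈ I ^ m := sModEq_pow_smul_top_iff.1 (x.2 hle).symm
  rw [AlgHom.comp_apply, level_mk, level_mk, Ideal.Quotient.factorₐ_apply_mk, Ideal.Quotient.eq,
    ← map_sub]
  rwa [← h.comap_pow] at hx

variable [IsAdicComplete J T]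

/-- The comparison map from the completion of `A` to `T`. -/
noncomputable def ofCompletion (h : IsAdicallyDense I J) : AdicCompletion I A →ₐ[A] T :=
  IsAdicComplete.liftAlgHom J h.level h.factor_comp_level

lemma mk_ofCompletion (h : IsAdicallyDense I J) (n : ℕ) (x : AdicCompletion I A) :
    Ideal.Quotient.mk (J ^ n) (h.ofCompletion x) = h.level n x :=
  IsAdicComplete.mk_liftAlgHom J h.level h.factor_comp_level n x

lemma ofCompletion_injective (h : IsAdicallyDense I J) : Function.Injective h.ofCompletion := by
  refine (injective_iff_map_eq_zero _).2 fun x hx => AdicCompletion.ext_evalₐ fun n => ?_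
  rw [map_zero, ← h.level_eq_zero_iff, ← mk_ofCompletion, hx, map_zero]

lemma ofCompletion_surjective (h : IsAdicallyDense I J) :
    Function.Surjective h.ofCompletion := fun u => by
  choose a ha using fun n => h.exists_sub_mem n u
  let x : AdicCompletion.AdicCauchySequence I A :=
    AdicCompletion.AdicCauchySequence.mk I A a fun n => by
      rw [sModEq_pow_smul_top_iff, ← h.comap_pow, Ideal.mem_comap, map_sub]
      simpa using sub_mem (ha n) (Ideal.pow_le_pow_right n.le_succ (ha (n + 1)))
  refine ⟨AdicCompletion.mk I A x, (IsHausdorff.eq_iff_smodEq (I := J)).2 fun n =>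
    sModEq_pow_smul_top_iff.2 (Ideal.Quotient.eq.1 ?_)⟩
  rw [mk_ofCompletion, level_mk]
  exact Ideal.Quotient.eq.2 (ha n)

/-- A complete ring in which `A` is adically dense is the completion of `A`. -/
noncomputable def completionEquiv (h : IsAdicallyDense I J) : AdicCompletion I A ≃ₐ[A] T :=
  AlgEquiv.ofBijective h.ofCompletion ⟨h.ofCompletion_injective, h.ofCompletion_surjective⟩

end IsAdicallyDense

end Completion

section Saturated

variable {T : Type u} [CommRing T]

lemma IsFractionClosed.isLocalHom_subtype {R : Subring T} (hR : IsFractionClosed R) :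
    IsLocalHom R.subtype :=
  ⟨fun _ => hR.isUnit_coe.1⟩

variable {Q₀ : Ideal T} {d : ℕ} {p : Stage T}

namespace Stage

namespace IsSaturated

lemma comap_map (hp : p.IsSaturated Q₀ d) (I : Ideal p.ring) :
    (I.map p.ring.subtype).comap p.ring.subtype = I := by
  refine le_antisymm (fun c hc => ?_) Ideal.le_comap_map
  obtain ⟨s, hs, hcs⟩ := Submodule.mem_span_finite_of_mem_span (Ideal.mem_comap.1 hc)
  have hsI : Submodule.span p.ring (s : Set T) ≤ Submodule.map (Algebra.linearMap p.ring T) I :=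
    Submodule.span_le.2 hs
  obtain ⟨b, hb, hbc⟩ := hsI (hp.mem_span s (fun a ha => by
    obtain ⟨b, -, rfl⟩ := hs ha
    exact b.2) c c.2 hcs)
  exact (Subtype.ext hbc : b = c) ▸ hb

lemma isNoetherianRing [IsNoetherianRing T] (hp : p.IsSaturated Q₀ d) :
    IsNoetherianRing p.ring := by
  have hmap : StrictMono (Ideal.map p.ring.subtype) :=
    Monotone.strictMono_of_injective (fun _ _ => Ideal.map_mono)
      (Function.LeftInverse.injective (g := Ideal.comap p.ring.subtype) hp.comap_map)
  rw [isNoetherianRing_iff, isNoetherian_iff']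
  exact hmap.wellFoundedGT

variable [IsLocalRing T]

/-- Density of the ring for `J²` gives `J = (J ∩ A)T + J²`, so Nakayama applies. -/
lemma map_comap [IsNoetherianRing T] (hp : p.IsSaturated Q₀ d) {J : Ideal T} (hJ : J ≠ ⊤)
    (hJp : ∀ P ∈ p.primes, ¬ J ≤ P) : (J.comap p.ring.subtype).map p.ring.subtype = J := by
  refine le_antisymm Ideal.map_comap_le (Submodule.le_of_le_smul_of_le_jacobson_bot (I := J)
    (IsNoetherian.noetherian _) ((le_maximalIdeal hJ).trans (maximalIdeal_le_jacobson _))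
    fun s hs => ?_)
  obtain ⟨x, hx, hxs⟩ := hp.exists_sub_mem (J ^ 2)
    (fun P hP h => hJp P hP ((hp.isPrime P hP).le_of_pow_le h)) s
  have hxJ : x ∈ J := by simpa using add_mem (Ideal.pow_le_self two_ne_zero hxs) hs
  rw [smul_eq_mul, ← pow_two, ← sub_sub_cancel x s]
  exact sub_mem (Submodule.mem_sup_left (Ideal.mem_map_of_mem p.ring.subtype
    (show (⟨x, hx⟩ : p.ring) ∈ J.comap p.ring.subtype from hxJ))) (Submodule.mem_sup_right hxs)

lemma isLocalRing (hp : p.IsSaturated Q₀ d) : IsLocalRing p.ring :=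
  have := hp.isFractionClosed.isLocalHom_subtype
  RingHom.domain_isLocalRing p.ring.subtype

lemma isAdicallyDense [IsNoetherianRing T] (hp : p.IsSaturated Q₀ d)
    (hm : maximalIdeal T ∉ p.primes) [IsLocalRing p.ring] :
    IsAdicallyDense (maximalIdeal p.ring) (maximalIdeal T) := by
  have hle : ∀ P ∈ p.primes, ¬ maximalIdeal T ≤ P := fun P hP h =>
    hm (((maximalIdeal.isMaximal T).eq_of_le (hp.isPrime P hP).ne_top h).symm ▸ hP)
  have hcomap : (maximalIdeal T).comap p.ring.subtype = maximalIdeal p.ring :=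
    have := hp.isFractionClosed.isLocalHom_subtype
    maximalIdeal_comap p.ring.subtype
  refine ⟨fun n => ?_, fun n u => ?_⟩
  · have h := hp.comap_map (maximalIdeal p.ring ^ n)
    rwa [Ideal.map_pow, ← hcomap, hp.map_comap Ideal.IsPrime.ne_top' hle, hcomap] at h
  · obtain ⟨x, hx, hxu⟩ := hp.exists_sub_mem (maximalIdeal T ^ n)
      (fun P hP h => hle P hP ((hp.isPrime P hP).le_of_pow_le h)) u
    exact ⟨⟨x, hx⟩, hxu⟩

/-- The ring of a saturated stage, as a local factorial domain with completion `T`. -/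
noncomputable def localUFD [IsNoetherianRing T] [IsAdicComplete (maximalIdeal T) T]
    (hp : p.IsSaturated Q₀ d) (hm : maximalIdeal T ∉ p.primes) : LocalUFDWithCompletion T :=
  letI := hp.isLocalRing
  { A := p.ring
    isDomain := hp.isFractionClosed.isDomain
    isNoetherian := hp.isNoetherianRing
    ufd := hp.ufm
    toCompletion := p.ring.subtype
    completionEquiv := (hp.isAdicallyDense hm).completionEquiv.toRingEquiv
    completionEquiv_comp := (hp.isAdicallyDense hm).completionEquiv.commutes }

end IsSaturated

end Stage

end Saturated

section SubsetDimension

variable {α β : Type*} [Preorder α] {s : Set α}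

lemma length_le_height_coe_last (l : LTSeries s) : (l.length : ℕ∞) ≤ Order.height (l.last : α) :=
  Order.length_le_height_last.trans
    (Order.height_le_height_apply_of_strictMono Subtype.val (fun _ _ h => h) _)

lemma krullDim_coe_le_of_height_le {n : ℕ} (h : ∀ x ∈ s, Order.height x ≤ n) :
    Order.krullDim s ≤ n :=
  iSup_le fun l => by exact_mod_cast (length_le_height_coe_last l).trans (h _ l.last.2)

lemma krullDim_coe_le_of_height_le_add_one {n : ℕ} (h : ∀ x ∈ s, Order.height x ≤ n + 1)
    (hmin : ∀ x ∈ s, ¬ IsMin x) : Order.krullDim s ≤ n := by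
  refine iSup_le fun l => ?_
  let l' : LTSeries α := l.map Subtype.val fun _ _ h => h
  obtain ⟨y, hy⟩ : ∃ y, y < l'.head := not_isMin_iff.1 (hmin _ l.head.2)
  have hlen := Order.length_le_height_last (p := l'.cons y hy)
  rw [RelSeries.last_cons, RelSeries.cons_length] at hlen
  have hle : l.length + 1 ≤ n + 1 := by exact_mod_cast hlen.trans (h _ l.last.2)
  exact_mod_cast Nat.le_of_succ_le_succ hle

lemma height_le_krullDim_coe [Preorder β] {f : β → α} (hf : StrictMono f) {b : β}
    (hs : ∀ y ≤ b, f y ∈ s) : Order.height b ≤ Order.krullDim s := by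
  rw [Order.height_eq_krullDim_Iic]
  exact Order.krullDim_le_of_strictMono (fun y : Set.Iic b => ⟨f y, hs y y.2⟩) fun _ _ h => hf h

end SubsetDimension

section FormalFibers

variable {T : Type u} [CommRing T]

lemma idealHt_eq_height (P : Ideal T) [hP : P.IsPrime] : idealHt P = P.height := by
  rw [PrimeSpectrum.height_eq_orderHeight ⟨P, hP⟩]
  exact le_antisymm (iInf₂_le (⟨P, hP⟩ : PrimeSpectrum T) le_rfl)
    (le_iInf₂ fun Q (hQ : ⟨P, hP⟩ ≤ Q) => Order.height_mono hQ)

lemma lt_height_maximalIdeal_iff [IsLocalRing T] {n : ℕ} :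
    (n : ℕ∞) < (maximalIdeal T).height ↔ (n : WithBot ℕ∞) + 1 ≤ ringKrullDim T := by
  rw [← maximalIdeal_height_eq_ringKrullDim, ← ENat.add_one_le_iff (ENat.natCast_ne_top n)]
  norm_cast

lemma alphaAt_eq_krullDim (X : LocalUFDWithCompletion T) (p : Ideal X.A) (hp : p.IsPrime) :
    alphaAt X p hp =
      Order.krullDim {Q : PrimeSpectrum T | Q.asIdeal.comap X.toCompletion = p} := by
  let := X.toCompletion.toAlgebra
  have hfiber : {Q : PrimeSpectrum T | Q.asIdeal.comap X.toCompletion = p} =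
      PrimeSpectrum.comap (algebraMap X.A T) ⁻¹' {⟨p, hp⟩} := by
    ext Q
    rw [Set.mem_preimage, Set.mem_singleton_iff, PrimeSpectrum.ext_iff]
    rfl
  rw [hfiber, Order.krullDim_eq_of_orderIso (PrimeSpectrum.preimageOrderIsoFiber X.A T ⟨p, hp⟩)]
  exact ringKrullDim_eq_of_ringEquiv (Algebra.TensorProduct.comm X.A T p.ResidueField).toRingEquiv

lemma exists_prime_eq_span_of_height_eq_one {A : Type*} [CommRing A] [IsDomain A]
    [IsNoetherianRing A] [UniqueFactorizationMonoid A] {p : Ideal A} [hp : p.IsPrime]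
    (h : p.height = 1) : ∃ z : A, Prime z ∧ p = Ideal.span {z} := by
  have hbot : p ≠ ⊥ := by
    rintro rfl
    simp at h
  obtain ⟨z, hzp, hz⟩ := hp.exists_mem_prime_of_ne_bot hbot
  have := (Ideal.span_singleton_prime hz.ne_zero).2 hz
  refine ⟨z, hz, (Ideal.eq_of_le_of_height_le _ ((Ideal.span_singleton_le_iff_mem p).2 hzp)
    ?_).symm⟩
  rw [h]
  exact Ideal.one_le_height_span_singleton_of_mem_nonZeroDivisors
    (mem_nonZeroDivisors_of_ne_zero hz.ne_zero)

lemma not_isMin_of_mem_nonZeroDivisors {z : T} (hz : z ∈ nonZeroDivisors T) {Q : PrimeSpectrum T}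
    (hzQ : z ∈ Q.asIdeal) : ¬ IsMin Q := fun hQ =>
  Set.disjoint_left.1 (Ideal.disjoint_nonZeroDivisors_of_mem_minimalPrimes
    (PrimeSpectrum.isMin_iff.1 hQ)) hzQ hz

variable {Q₀ : Ideal T} {d t : ℕ} {p : Stage T}

namespace Stage

lemma IsGood.le_krullDim_comap_eq_bot (hp : p.IsGood Q₀ d) :
    Q₀.height ≤ Order.krullDim {Q : PrimeSpectrum T | Q.asIdeal.comap p.ring.subtype = ⊥} := by
  rw [PrimeSpectrum.height_eq_orderHeight ⟨Q₀, hp.isPrime Q₀ hp.mem_primes⟩]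
  exact height_le_krullDim_coe strictMono_id fun Q hQ =>
    (Submodule.eq_bot_iff _).2 fun a ha => Subtype.ext (hp.meetsTrivially a a.2 (hQ ha))

/-- The fiber over a prime element `z` contains every prime between `zT` and a controlled prime of
height `d` containing `z`. -/
lemma IsGood.le_krullDim_comap_eq_span [IsNoetherianRing T] (hp : p.IsGood Q₀ d)
    {z : p.ring} (hz : Prime z) :
    ((d - 1 : ℕ) : WithBot ℕ∞) ≤
      Order.krullDim {Q : PrimeSpectrum T | Q.asIdeal.comap p.ring.subtype = Ideal.span {z}} := by
  obtain ⟨Q, hQ, hQd, hzQ⟩ := hp.exists_height_eq z hz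
  have := hp.isPrime Q hQ
  have hle : Ideal.span {(z : T)} ≤ Q := (Ideal.span_singleton_le_iff_mem _).2 hzQ
  let Q' : PrimeSpectrum (T ⧸ Ideal.span {(z : T)}) :=
    ⟨Q.map (Ideal.Quotient.mk _), Ideal.isPrime_map_quotientMk_of_isPrime hle⟩
  have hheight : ((d - 1 : ℕ) : ℕ∞) ≤ Order.height Q' := by
    rw [← Q'.height_eq_orderHeight, ENat.natCast_sub, tsub_le_iff_right]
    exact hQd.symm.le.trans (Ideal.height_le_height_add_one_of_mem hzQ)
  refine le_trans (WithBot.coe_le_coe.2 hheight) (height_le_krullDim_coe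
    (RingHom.strictMono_comap_of_surjective Ideal.Quotient.mk_surjective) fun P hP => ?_)
  have hPQ : P.asIdeal.comap (Ideal.Quotient.mk (Ideal.span {(z : T)})) ≤ Q := by
    refine (Ideal.comap_mono hP).trans_eq ?_
    rw [Ideal.comap_map_mk hle]
  refine le_antisymm (fun a ha => Ideal.mem_span_singleton.2
    (hp.dvd_of_mem Q hQ z a hz hzQ (hPQ ha))) ((Ideal.span_singleton_le_iff_mem _).2 ?_)
  have hz0 : Ideal.Quotient.mk (Ideal.span {(z : T)}) z = 0 :=
    Ideal.Quotient.eq_zero_iff_mem.2 (Ideal.mem_span_singleton_self _)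
  change Ideal.Quotient.mk (Ideal.span {(z : T)}) z ∈ P.asIdeal
  exact hz0 ▸ zero_mem _

variable [IsLocalRing T]

lemma IsGood.maximalIdeal_notMem_primes (hp : p.IsGood Q₀ d)
    (hd : (d : ℕ∞) < (maximalIdeal T).height) (hQ₀ : Q₀ ≠ maximalIdeal T)
    (hAss : maximalIdeal T ∉ associatedPrimes T T) : maximalIdeal T ∉ p.primes := fun hm => by
  obtain h | h | h := hp.bound _ hm
  exacts [hAss h, hQ₀ h.symm, hd.not_ge h.1]

variable [IsNoetherianRing T]

lemma IsSaturated.height_le_of_comap_eq_bot (hp : p.IsSaturated Q₀ d) (hQ₀ : Q₀.height ≤ t)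
    (hdt : d - 1 ≤ t) (hAss : ∀ P ∈ associatedPrimes T T, P.height ≤ ((d - 1 : ℕ) : ℕ∞))
    {Q : Ideal T} [Q.IsPrime] (hQ : Q.comap p.ring.subtype = ⊥) : Q.height ≤ t := by
  by_contra! hlt
  have hnot : ∀ P ∈ p.primes, ¬ Q ≤ P := fun P hP hle => by
    obtain h | rfl | ⟨h, hPR⟩ := hp.bound P hP
    · exact hlt.not_ge ((Ideal.height_mono hle).trans ((hAss P h).trans (by exact_mod_cast hdt)))
    · exact hlt.not_ge ((Ideal.height_mono hle).trans hQ₀)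
    · have hdQ : P.height ≤ Q.height := h.trans ((by
        exact_mod_cast (by lia : d ≤ t + 1) : (d : ℕ∞) ≤ t + 1).trans (Order.add_one_le_of_lt hlt))
      have := hp.isPrime P hP
      obtain rfl := Ideal.eq_of_le_of_height_le Q hle hdQ
      exact hPR fun s hs hsQ => congrArg Subtype.val
        ((Submodule.eq_bot_iff _).1 hQ ⟨s, hs⟩ hsQ)
  have hbot := hp.map_comap Ideal.IsPrime.ne_top' hnot
  rw [hQ, Ideal.map_bot] at hbot
  simp [← hbot] at hlt

lemma IsSaturated.height_le_of_comap_eq_span (hp : p.IsSaturated Q₀ d) (hd : 1 ≤ d)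
    {z : p.ring} (hz : Prime z) {Q : Ideal T} [Q.IsPrime]
    (hQ : Q.comap p.ring.subtype = Ideal.span {z}) : Q.height ≤ d := by
  by_contra! hlt
  have hzQ : (z : T) ∈ Q := (hQ.ge (Ideal.mem_span_singleton_self z) :)
  have hnot : ∀ P ∈ p.primes, ¬ Q ≤ P := fun P hP hle => by
    obtain h | rfl | ⟨h, -⟩ := hp.bound P hP
    · exact mem_nonZeroDivisors_iff_forall_associatedPrimes.1
        (hp.isFractionClosed.coe_mem_nonZeroDivisors hz.ne_zero) P h (hle hzQ)
    · exact hz.ne_zero (Subtype.ext (hp.meetsTrivially z z.2 (hle hzQ)))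
    · exact hlt.not_ge ((Ideal.height_mono hle).trans h)
  have hspan := hp.map_comap Ideal.IsPrime.ne_top' hnot
  rw [hQ, Ideal.map_span, Set.image_singleton] at hspan
  have hQz : Q ∈ (Ideal.span {(z : T)}).minimalPrimes :=
    hspan ▸ (Ideal.minimalPrimes_eq_subsingleton_self (I := Q)).ge rfl
  exact hlt.not_ge ((Ideal.height_le_one_of_isPrincipal_of_mem_minimalPrimes _ _ hQz).trans
    (by exact_mod_cast hd))

lemma IsSaturated.krullDim_comap_eq_bot (hp : p.IsSaturated Q₀ d) (hQ₀ : Q₀.height = t)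
    (hdt : d - 1 ≤ t) (hAss : ∀ P ∈ associatedPrimes T T, P.height ≤ ((d - 1 : ℕ) : ℕ∞)) :
    Order.krullDim {Q : PrimeSpectrum T | Q.asIdeal.comap p.ring.subtype = ⊥} = t := by
  refine le_antisymm (krullDim_coe_le_of_height_le fun Q hQ => ?_) ?_
  · rw [← Q.height_eq_orderHeight]
    exact hp.height_le_of_comap_eq_bot hQ₀.le hdt hAss hQ
  · exact_mod_cast hQ₀ ▸ hp.le_krullDim_comap_eq_bot

lemma IsSaturated.krullDim_comap_eq_span (hp : p.IsSaturated Q₀ d) (hd : 1 ≤ d) {z : p.ring}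
    (hz : Prime z) :
    Order.krullDim {Q : PrimeSpectrum T | Q.asIdeal.comap p.ring.subtype = Ideal.span {z}} =
      ((d - 1 : ℕ) : WithBot ℕ∞) := by
  refine le_antisymm (krullDim_coe_le_of_height_le_add_one (fun Q hQ => ?_) fun Q hQ => ?_)
    (hp.le_krullDim_comap_eq_span hz)
  · rw [← Q.height_eq_orderHeight, ← ENat.natCast_one, ← ENat.natCast_add, Nat.sub_add_cancel hd]
    exact hp.height_le_of_comap_eq_span hd hz hQ
  · exact not_isMin_of_mem_nonZeroDivisors
      (hp.isFractionClosed.coe_mem_nonZeroDivisors hz.ne_zero)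
      (hQ.ge (Ideal.mem_span_singleton_self z) :)

variable [IsAdicComplete (maximalIdeal T) T]

lemma IsSaturated.alphaAt_localUFD_bot (hp : p.IsSaturated Q₀ d) (hm : maximalIdeal T ∉ p.primes)
    (hQ₀ : Q₀.height = t) (hdt : d - 1 ≤ t)
    (hAss : ∀ P ∈ associatedPrimes T T, P.height ≤ ((d - 1 : ℕ) : ℕ∞)) :
    alphaAt (hp.localUFD hm) ⊥ Ideal.isPrime_bot = t := by
  rw [alphaAt_eq_krullDim]
  exact hp.krullDim_comap_eq_bot hQ₀ hdt hAss

lemma IsSaturated.alphaAt_localUFD_of_height_eq_one (hp : p.IsSaturated Q₀ d)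
    (hm : maximalIdeal T ∉ p.primes) (hd : 1 ≤ d) {I : Ideal (hp.localUFD hm).A} (hI : I.IsPrime)
    (h : I.height = 1) : alphaAt (hp.localUFD hm) I hI = ((d - 1 : ℕ) : WithBot ℕ∞) := by
  obtain ⟨z, hz, rfl⟩ := exists_prime_eq_span_of_height_eq_one h
  rw [alphaAt_eq_krullDim]
  exact hp.krullDim_comap_eq_span hd hz

end Stage

end FormalFibers

theorem exists_local_UFD_with_formal_fibers_general {T : Type u} [CommRing T] [IsLocalRing T]
    [IsNoetherianRing T] [IsAdicComplete (maximalIdeal T) T]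
    (hint : ∀ n : ℤ, n ≠ 0 → ((n : ℤ) : T) ∈ nonZeroDivisors T)
    (hcard : #T = #(ResidueField T))
    (d t : ℕ) (hd1 : 1 ≤ d) (hd2 : (d : WithBot ℕ∞) + 1 ≤ ringKrullDim T)
    (ht2 : (t : WithBot ℕ∞) + 1 ≤ ringKrullDim T) (hdt : d - 1 ≤ t)
    (hAss : ∀ p ∈ associatedPrimes T T, idealHt p ≤ ((d - 1 : ℕ) : ℕ∞))
    (hreg : ∀ z ∈ nonZeroDivisors T, ∀ Q ∈ associatedPrimes T (T ⧸ Ideal.span {z}),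
      idealHt Q ≤ (d : ℕ∞)) :
    ∃ X : LocalUFDWithCompletion T,
      alphaAt X ⊥ Ideal.isPrime_bot = (t : WithBot ℕ∞) ∧
      ∀ (p : Ideal X.A) (hp : p.IsPrime), idealHt p = 1 →
        alphaAt X p hp = ((d - 1 : ℕ) : WithBot ℕ∞) := by
  rw [← lt_height_maximalIdeal_iff] at hd2 ht2
  have hAss' : ∀ P ∈ associatedPrimes T T, P.height ≤ ((d - 1 : ℕ) : ℕ∞) := fun P hP =>
    have := hP.isPrime
    idealHt_eq_height P ▸ hAss P hP
  have hd : IsAdmissibleHeight T d := ⟨hd1, hd2, fun z hz P hP =>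
    have := hP.isPrime
    idealHt_eq_height P ▸ hreg z hz P hP⟩
  have hT : ℵ₀ < #T := aleph0_lt_mk_of_isPrecomplete (I := maximalIdeal T)
    (not_maximalIdeal_pow_le_pow_succ (zero_le.trans_lt hd2))
  obtain ⟨Q₀, hQ₀, b, hb, hsize⟩ := exists_isGood_height_eq hd (hcard ▸ hT) hint ht2
  obtain ⟨p, hp⟩ := hb.exists_isSaturated hd (hsize.trans_lt (hcard ▸ hT)) hcard.le
  have hm : maximalIdeal T ∉ p.primes := hp.maximalIdeal_notMem_primes hd2
    (fun h => ht2.ne (h ▸ hQ₀).symm) fun h => (hd2.trans_le' (by simp)).not_ge (hAss' _ h)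
  exact ⟨hp.localUFD hm, hp.alphaAt_localUFD_bot hm hQ₀ hdt hAss', fun I hI h =>
    hp.alphaAt_localUFD_of_height_eq_one hm hd1 hI (idealHt_eq_height I ▸ h)⟩

/-- **Main Theorem.** Let `(T, m)` be a complete local equidimensional ring with
`dim T ≥ 2` and `depth T > 1`, such that no integer of `T` is a zerodivisor and
`|T| = |T/m|`. Let `d`, `t` be integers with `1 ≤ d ≤ dim T − 1`, `0 ≤ t ≤ dim T − 1`
and `d − 1 ≤ t`. Assume `ht p ≤ d − 1` for every `p ∈ Ass T` and that `ht Q ≤ d`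
whenever `z ∈ T` is regular and `Q ∈ Ass(T/zT)`. Then there is a local UFD `A` whose
completion is `T` with `α(A, (0)) = t` and `α(A, p) = d − 1` for every height one prime
ideal `p` of `A`. -/
theorem exists_local_UFD_with_formal_fibers {T : Type u} [CommRing T] [IsLocalRing T]
    [IsNoetherianRing T] [IsAdicComplete (maximalIdeal T) T]
    (hequi : IsEquidim T) (hdim : 2 ≤ ringKrullDim T) (hdepth : DepthGTOne T)
    (hint : ∀ n : ℤ, n ≠ 0 → ((n : ℤ) : T) ∈ nonZeroDivisors T)
    (hcard : #T = #(ResidueField T))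
    (d t : ℕ) (hd1 : 1 ≤ d) (hd2 : (d : WithBot ℕ∞) + 1 ≤ ringKrullDim T)
    (ht2 : (t : WithBot ℕ∞) + 1 ≤ ringKrullDim T) (hdt : d - 1 ≤ t)
    (hAss : ∀ p ∈ associatedPrimes T T, idealHt p ≤ ((d - 1 : ℕ) : ℕ∞))
    (hreg : ∀ z ∈ nonZeroDivisors T, ∀ Q ∈ associatedPrimes T (T ⧸ Ideal.span {z}),
      idealHt Q ≤ (d : ℕ∞)) :
    ∃ X : LocalUFDWithCompletion T,
      alphaAt X ⊥ Ideal.bot_prime = (t : WithBot ℕ∞) ∧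
      ∀ (p : Ideal X.A) (hp : p.IsPrime), idealHt p = 1 →
        alphaAt X p hp = ((d - 1 : ℕ) : WithBot ℕ∞) := by
  exact exists_local_UFD_with_formal_fibers_general hint hcard d t hd1 hd2 ht2 hdt hAss hreg
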